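/- arXiv:1404.7593 — 9 statements merged into one kernel-verified Lean document; each statement's English description precedes it below -/
import Mathlib

section
/- Monotonicity of the iterated Riccati operator: Let P0¹ and P0² be symmetric n×n real matrices with P0¹ ≤ P0² in the Loewner order, and let k be a natural number. Suppose that for every i with 0 ≤ i ≤ k−1 and for j = 1,2 the matrix γ²·I − Bᵀ(R_i(P0ʲ))B is positive definite (so that R_k(P0¹) and R_k(P0²) are well defined). Then R_k(P0¹) ≤ R_k(P0²) in the Loewner order. -/
open Matrix

/-- The Riccati operator `R(P) = Φ + AᵀPA + AᵀPB(γ²I − BᵀPB)⁻¹BᵀPA`. -/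
noncomputable def Ric {n m : ℕ} (A : Matrix (Fin n) (Fin n) ℝ) (B : Matrix (Fin n) (Fin m) ℝ)
    (Φ : Matrix (Fin n) (Fin n) ℝ) (γ : ℝ) (P : Matrix (Fin n) (Fin n) ℝ) :
    Matrix (Fin n) (Fin n) ℝ :=
  Φ + Aᵀ * P * A +
    Aᵀ * P * B * (γ ^ 2 • (1 : Matrix (Fin m) (Fin m) ℝ) - Bᵀ * P * B)⁻¹ * Bᵀ * P * A

/-!
For a feedback `K`, the map `J_K(P) = Φ + (A + BK)ᴴ P (A + BK) - Kᴴ W K` is monotone in `P`.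
Completing the square in `K` gives `R(P) = J_K(P) + (K - L)ᴴ (W - Bᴴ P B) (K - L)`, where
`L = (W - Bᴴ P B)⁻¹ Bᴴ P A`. When `W - Bᴴ P B` is positive definite, `R(P)` is therefore the
maximum of `J_K(P)` over `K`, attained at `K = L`, and a maximum of monotone maps is monotone.
-/

section Algebra

variable {l m n R : Type*} [Fintype m] [Fintype n] [CommRing R] [StarRing R]

/-- The matrix `W - Bᴴ P B` inverted by the Riccati map. The weight `W` is `γ² I` for `Ric`. -/
def riccatiPivot (B : Matrix n m R) (W : Matrix m m R) (P : Matrix n n R) : Matrix m m R :=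
  W - Bᴴ * P * B

/-- The quadratic form `J_K(P) = Φ + (A + BK)ᴴ P (A + BK) - Kᴴ W K` obtained when the input of the
system `x ↦ Ax + Bw` is the linear feedback `w = Kx`. The Riccati map is its maximum over `K`. -/
def feedbackValue (A : Matrix n l R) (B : Matrix n m R) (Φ : Matrix l l R) (W : Matrix m m R)
    (K : Matrix m l R) (P : Matrix n n R) : Matrix l l R :=
  Φ + (A + B * K)ᴴ * P * (A + B * K) - Kᴴ * W * K

variable [DecidableEq m]

/-- The Riccati operator over a commutative star ring, with conjugate transposes and an arbitrary
weight `W` in place of `γ² I`. The matrix `A` may be rectangular. As in `Ric`, the inverse is `0`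
when `riccatiPivot B W P` is singular. -/
noncomputable def riccatiMap (A : Matrix n l R) (B : Matrix n m R) (Φ : Matrix l l R)
    (W : Matrix m m R) (P : Matrix n n R) : Matrix l l R :=
  Φ + Aᴴ * P * A + Aᴴ * P * B * (riccatiPivot B W P)⁻¹ * Bᴴ * P * A

/-- The feedback `L = (W - Bᴴ P B)⁻¹ Bᴴ P A` that maximizes `feedbackValue`. -/
noncomputable def riccatiGain (A : Matrix n l R) (B : Matrix n m R) (W : Matrix m m R)
    (P : Matrix n n R) : Matrix m l R :=
  (riccatiPivot B W P)⁻¹ * (Bᴴ * P * A)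

variable (A : Matrix n l R) (B : Matrix n m R) {Φ : Matrix l l R} {W : Matrix m m R}
  {P : Matrix n n R}

theorem riccatiPivot_mul_riccatiGain (hunit : IsUnit (riccatiPivot B W P)) :
    riccatiPivot B W P * riccatiGain A B W P = Bᴴ * P * A :=
  mul_nonsing_inv_cancel_left _ _ ((isUnit_iff_isUnit_det _).1 hunit)

theorem conjTranspose_riccatiGain_mul_riccatiPivot (hP : P.IsHermitian)
    (hpivot : (riccatiPivot B W P).IsHermitian) (hunit : IsUnit (riccatiPivot B W P)) :
    (riccatiGain A B W P)ᴴ * riccatiPivot B W P = Aᴴ * P * B := by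
  simpa only [conjTranspose_mul, conjTranspose_conjTranspose, hpivot.eq, hP.eq, Matrix.mul_assoc]
    using congrArg conjTranspose (riccatiPivot_mul_riccatiGain A B hunit)

theorem riccatiMap_eq_feedbackValue_add (Φ : Matrix l l R) (hP : P.IsHermitian)
    (hpivot : (riccatiPivot B W P).IsHermitian) (hunit : IsUnit (riccatiPivot B W P))
    (K : Matrix m l R) :
    riccatiMap A B Φ W P = feedbackValue A B Φ W K P +
      (K - riccatiGain A B W P)ᴴ * riccatiPivot B W P * (K - riccatiGain A B W P) := by
  set L := riccatiGain A B W P with hL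
  have square : (K - L)ᴴ * riccatiPivot B W P * (K - L) =
      Kᴴ * riccatiPivot B W P * K - Kᴴ * (Bᴴ * P * A) - Aᴴ * P * B * K + Aᴴ * P * B * L := by
    rw [← conjTranspose_riccatiGain_mul_riccatiPivot A B hP hpivot hunit,
      ← riccatiPivot_mul_riccatiGain A B hunit, ← hL]
    simp only [conjTranspose_sub, Matrix.sub_mul, Matrix.mul_sub, Matrix.mul_assoc]
    abel
  have riccati : riccatiMap A B Φ W P = Φ + Aᴴ * P * A + Aᴴ * P * B * L := by
    simp only [riccatiMap, hL, riccatiGain, Matrix.mul_assoc]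
  rw [riccati, square, feedbackValue, riccatiPivot]
  simp only [conjTranspose_add, conjTranspose_mul, Matrix.add_mul, Matrix.mul_add, Matrix.sub_mul,
    Matrix.mul_sub, Matrix.mul_assoc]
  abel

theorem riccatiMap_eq_feedbackValue_riccatiGain (Φ : Matrix l l R) (hP : P.IsHermitian)
    (hpivot : (riccatiPivot B W P).IsHermitian) (hunit : IsUnit (riccatiPivot B W P)) :
    riccatiMap A B Φ W P = feedbackValue A B Φ W (riccatiGain A B W P) P := by
  simpa only [sub_self, Matrix.mul_zero, add_zero] using
    riccatiMap_eq_feedbackValue_add A B Φ hP hpivot hunit (riccatiGain A B W P)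

theorem isHermitian_riccatiMap (hΦ : Φ.IsHermitian) (hP : P.IsHermitian)
    (hpivot : (riccatiPivot B W P).IsHermitian) : (riccatiMap A B Φ W P).IsHermitian := by
  have hcorrection := isHermitian_conjTranspose_mul_mul (Bᴴ * P * A) hpivot.inv
  simp only [conjTranspose_mul, conjTranspose_conjTranspose, hP.eq, ← Matrix.mul_assoc]
    at hcorrection
  exact (hΦ.add (isHermitian_conjTranspose_mul_mul A hP)).add hcorrection

theorem isHermitian_iterate_riccatiMap {A : Matrix n n R} {B : Matrix n m R} {Φ : Matrix n n R}
    (hΦ : Φ.IsHermitian) (hP : P.IsHermitian) {k : ℕ}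
    (hpivot : ∀ i < k, (riccatiPivot B W ((riccatiMap A B Φ W)^[i] P)).IsHermitian) :
    ((riccatiMap A B Φ W)^[k] P).IsHermitian := by
  induction k with
  | zero => exact hP
  | succ k ih =>
    rw [Function.iterate_succ_apply']
    exact isHermitian_riccatiMap A B hΦ (ih fun i hi => hpivot i (hi.trans k.lt_succ_self))
      (hpivot k k.lt_succ_self)

end Algebra

section Order

variable {l m n R 𝕜 : Type*} [Fintype n] [CommRing R] [PartialOrder R] [StarRing R]

theorem posDef_riccatiPivot_of_posSemidef_sub [Finite m] [AddLeftMono R]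
    {B : Matrix n m R} {W : Matrix m m R} {P Q : Matrix n n R}
    (hPQ : (Q - P).PosSemidef) (hpivot : (riccatiPivot B W Q).PosDef) :
    (riccatiPivot B W P).PosDef := by
  have hsplit : riccatiPivot B W P = riccatiPivot B W Q + Bᴴ * (Q - P) * B := by
    rw [riccatiPivot, riccatiPivot, Matrix.mul_sub, Matrix.sub_mul]
    abel
  cases nonempty_fintype m
  exact hsplit ▸ hpivot.add_posSemidef (hPQ.conjTranspose_mul_mul_same B)

variable [Fintype m]

theorem posSemidef_feedbackValue_sub [Finite l] (A : Matrix n l R) (B : Matrix n m R)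
    (Φ : Matrix l l R) (W : Matrix m m R) (K : Matrix m l R)
    {P Q : Matrix n n R} (hPQ : (Q - P).PosSemidef) :
    (feedbackValue A B Φ W K Q - feedbackValue A B Φ W K P).PosSemidef := by
  have hdiff : feedbackValue A B Φ W K Q - feedbackValue A B Φ W K P =
      (A + B * K)ᴴ * (Q - P) * (A + B * K) := by
    rw [feedbackValue, feedbackValue, Matrix.mul_sub, Matrix.sub_mul]
    abel
  cases nonempty_fintype l
  exact hdiff ▸ hPQ.conjTranspose_mul_mul_same (A + B * K)

variable [Field 𝕜] [PartialOrder 𝕜] [StarRing 𝕜] [DecidableEq m]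

theorem posSemidef_riccatiMap_sub_feedbackValue [Finite l] (A : Matrix n l 𝕜) (B : Matrix n m 𝕜)
    (Φ : Matrix l l 𝕜) {W : Matrix m m 𝕜} {P : Matrix n n 𝕜} (hP : P.IsHermitian)
    (hpivot : (riccatiPivot B W P).PosDef) (K : Matrix m l 𝕜) :
    (riccatiMap A B Φ W P - feedbackValue A B Φ W K P).PosSemidef := by
  rw [riccatiMap_eq_feedbackValue_add A B Φ hP hpivot.isHermitian hpivot.isUnit K,
    add_sub_cancel_left]
  cases nonempty_fintype l
  exact hpivot.posSemidef.conjTranspose_mul_mul_same _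

variable [AddLeftMono 𝕜]

theorem posSemidef_riccatiMap_sub [Finite l] (A : Matrix n l 𝕜) (B : Matrix n m 𝕜)
    (Φ : Matrix l l 𝕜) {W : Matrix m m 𝕜} {P Q : Matrix n n 𝕜} (hQ : Q.IsHermitian)
    (hPQ : (Q - P).PosSemidef) (hpivotQ : (riccatiPivot B W Q).PosDef) :
    (riccatiMap A B Φ W Q - riccatiMap A B Φ W P).PosSemidef := by
  have hP : P.IsHermitian := sub_sub_cancel Q P ▸ hQ.sub hPQ.isHermitian
  have hpivotP := posDef_riccatiPivot_of_posSemidef_sub hPQ hpivotQ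
  rw [riccatiMap_eq_feedbackValue_riccatiGain A B Φ hP hpivotP.isHermitian hpivotP.isUnit,
    ← sub_add_sub_cancel _ (feedbackValue A B Φ W (riccatiGain A B W P) Q)]
  exact (posSemidef_riccatiMap_sub_feedbackValue A B Φ hQ hpivotQ _).add
    (posSemidef_feedbackValue_sub A B Φ W _ hPQ)

theorem riccati_iterate_monotone_general (A : Matrix n n 𝕜) (B : Matrix n m 𝕜)
    {Φ : Matrix n n 𝕜} (hΦ : Φ.IsHermitian) {W : Matrix m m 𝕜} {P₁ P₂ : Matrix n n 𝕜}
    (hP₂ : P₂.IsHermitian) (hle : (P₂ - P₁).PosSemidef) {k : ℕ}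
    (hpivot : ∀ i < k, (riccatiPivot B W ((riccatiMap A B Φ W)^[i] P₂)).PosDef) :
    ((riccatiMap A B Φ W)^[k] P₂ - (riccatiMap A B Φ W)^[k] P₁).PosSemidef := by
  induction k with
  | zero => exact hle
  | succ k ih =>
    have hpivot_lt : ∀ i < k, (riccatiPivot B W ((riccatiMap A B Φ W)^[i] P₂)).PosDef :=
      fun i hi => hpivot i (hi.trans k.lt_succ_self)
    rw [Function.iterate_succ_apply', Function.iterate_succ_apply']
    exact posSemidef_riccatiMap_sub A B Φ
      (isHermitian_iterate_riccatiMap hΦ hP₂ fun i hi => (hpivot_lt i hi).isHermitian)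
      (ih hpivot_lt) (hpivot k k.lt_succ_self)

end Order

theorem ric_eq_riccatiMap {n m : ℕ} (A : Matrix (Fin n) (Fin n) ℝ) (B : Matrix (Fin n) (Fin m) ℝ)
    (Φ : Matrix (Fin n) (Fin n) ℝ) (γ : ℝ) : Ric A B Φ γ = riccatiMap A B Φ (γ ^ 2 • 1) := by
  funext P
  simp only [Ric, riccatiMap, riccatiPivot, conjTranspose_eq_transpose_of_trivial]

/-- Monotonicity of the iterated Riccati operator in the Loewner order. -/
theorem riccati_iterate_monotone {n m : ℕ}
    (A : Matrix (Fin n) (Fin n) ℝ) (B : Matrix (Fin n) (Fin m) ℝ)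
    (Φ : Matrix (Fin n) (Fin n) ℝ) (hΦsymm : Φ.IsSymm) (hΦ : Φ.PosDef)
    (γ : ℝ) (hγ : 0 < γ)
    (P₁ P₂ : Matrix (Fin n) (Fin n) ℝ) (hP₁ : P₁.IsSymm) (hP₂ : P₂.IsSymm)
    (hle : (P₂ - P₁).PosSemidef) (k : ℕ)
    (h1 : ∀ i < k,
      (γ ^ 2 • (1 : Matrix (Fin m) (Fin m) ℝ) - Bᵀ * ((Ric A B Φ γ)^[i] P₁) * B).PosDef)
    (h2 : ∀ i < k,
      (γ ^ 2 • (1 : Matrix (Fin m) (Fin m) ℝ) - Bᵀ * ((Ric A B Φ γ)^[i] P₂) * B).PosDef) :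
    ((Ric A B Φ γ)^[k] P₂ - (Ric A B Φ γ)^[k] P₁).PosSemidef := by
  rw [ric_eq_riccatiMap] at h2 ⊢
  exact riccati_iterate_monotone_general A B hΦsymm hP₂ hle h2
end

section
/- Invariance of the space of quadratics with Hessian above M (Theorem on the value function space): Let M be a symmetric n×n real matrix such that γ²·I − Bᵀ(R_k(M))B is positive definite for every k ≥ 0 and such that R(M) − M is positive definite. Let P0 be a symmetric n×n real matrix with P0 − M positive definite, let k ≥ 1, and suppose γ²·I − Bᵀ(R_i(P0))B is positive definite for every 0 ≤ i ≤ k−1 (so R_k(P0) is well defined). Then R_k(P0) − M is positive definite. -/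
open Matrix

/-!
For symmetric `P` with `γ² I - Bᵀ P B` positive definite, `Ric A B Φ γ P` is the matrix of the
quadratic form `x ↦ max_w (xᵀ Φ x - γ² wᵀ w + (A x + B w)ᵀ P (A x + B w))`. Completing the square
in `w` shows that it dominates the cost of every linear disturbance `w = K x` and equals that cost
at the optimal gain. For a fixed gain the cost is monotone in `P`, so using the optimal gain for `M`
as a competitor for `P ≥ M` gives `Ric M ≤ Ric P`. As `M < Ric M`, induction keeps all the iterates
of `P₀` above `M`, and strictly so after each step because `Ric P ≥ Ric M > M`.
-/

open scoped MatrixOrder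

section CompleteSquare

variable {m n R : Type*} [Fintype m] [DecidableEq m] [CommRing R]

theorem transpose_mul_nonsing_inv_mul_eq_complete_square {S : Matrix m m R} (hS : S.IsSymm)
    (hdet : IsUnit S.det) (N K : Matrix m n R) :
    Nᵀ * S⁻¹ * N =
      Nᵀ * K + Kᵀ * N - Kᵀ * S * K + (K - S⁻¹ * N)ᵀ * S * (K - S⁻¹ * N) := by
  have hcancel : S * (S⁻¹ * N) = N := mul_nonsing_inv_cancel_left S N hdet
  have htranspose : (S⁻¹ * N)ᵀ * S = Nᵀ := by
    rw [← hS.eq, ← transpose_mul, hS.eq, hcancel]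
  rw [transpose_sub, Matrix.sub_mul, htranspose, Matrix.sub_mul, Matrix.mul_sub, Matrix.mul_sub,
    Matrix.mul_assoc Kᵀ S (S⁻¹ * N), hcancel, ← Matrix.mul_assoc Nᵀ]
  abel

end CompleteSquare

section LoewnerOrder

open scoped ComplexOrder

variable {m n 𝕜 : Type*} [RCLike 𝕜] {P Q : Matrix n n 𝕜}

theorem posDef_of_posDef_of_le (hP : P.PosDef) (hPQ : P ≤ Q) : Q.PosDef := by
  simpa only [add_sub_cancel] using hP.add_posSemidef (le_iff.mp hPQ)

theorem isHermitian_of_isHermitian_of_le (hP : P.IsHermitian) (hPQ : P ≤ Q) : Q.IsHermitian := by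
  simpa only [add_sub_cancel] using hP.add (le_iff.mp hPQ).isHermitian

theorem conjTranspose_mul_mul_le_conjTranspose_mul_mul [Finite m] [Fintype n]
    (hPQ : P ≤ Q) (C : Matrix n m 𝕜) : Cᴴ * P * C ≤ Cᴴ * Q * C := by
  simpa only [le_iff, Matrix.mul_sub, Matrix.sub_mul] using
    (le_iff.mp hPQ).conjTranspose_mul_mul_same C

end LoewnerOrder

namespace Ric

variable {n m : ℕ} (A : Matrix (Fin n) (Fin n) ℝ) (B : Matrix (Fin n) (Fin m) ℝ)
  (Φ : Matrix (Fin n) (Fin n) ℝ) (γ : ℝ)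

/-- The matrix `γ² I - Bᵀ P B`, the negative of the quadratic part in the disturbance `w` of
`-γ² wᵀ w + (A x + B w)ᵀ P (A x + B w)`. Its positive definiteness makes that cost strictly concave
in `w`, so that the maximum over `w` exists. -/
def disturbanceWeight (P : Matrix (Fin n) (Fin n) ℝ) : Matrix (Fin m) (Fin m) ℝ :=
  γ ^ 2 • (1 : Matrix (Fin m) (Fin m) ℝ) - Bᵀ * P * B

/-- The gain `K` of the maximizing disturbance `w = K x`. It is meaningful only when
`disturbanceWeight B γ P` is invertible, since otherwise the matrix inverse is `0`. -/
noncomputable def optimalGain (P : Matrix (Fin n) (Fin n) ℝ) : Matrix (Fin m) (Fin n) ℝ :=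
  (disturbanceWeight B γ P)⁻¹ * (Bᵀ * P * A)

/-- The matrix of the quadratic form in `x` obtained from the one-step cost
`xᵀ Φ x - γ² wᵀ w + (A x + B w)ᵀ P (A x + B w)` under the linear disturbance `w = K x`. -/
def gainCost (K : Matrix (Fin m) (Fin n) ℝ) (P : Matrix (Fin n) (Fin n) ℝ) :
    Matrix (Fin n) (Fin n) ℝ :=
  Φ + (A + B * K)ᵀ * P * (A + B * K) - γ ^ 2 • (Kᵀ * K)

variable {B γ} {M P : Matrix (Fin n) (Fin n) ℝ}

theorem isSymm_disturbanceWeight (hP : P.IsSymm) : (disturbanceWeight B γ P).IsSymm := by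
  simp only [IsSymm, disturbanceWeight, transpose_sub, transpose_smul, transpose_one,
    transpose_mul, transpose_transpose, hP.eq, Matrix.mul_assoc]

theorem disturbanceWeight_anti (hMP : M ≤ P) :
    disturbanceWeight B γ P ≤ disturbanceWeight B γ M := by
  have hB : Bᵀ * M * B ≤ Bᵀ * P * B := by
    simpa only [conjTranspose_eq_transpose_of_trivial] using
      conjTranspose_mul_mul_le_conjTranspose_mul_mul hMP B
  exact sub_le_sub_left hB _

theorem gainCost_mono (K : Matrix (Fin m) (Fin n) ℝ) (hMP : M ≤ P) :
    gainCost A B Φ γ K M ≤ gainCost A B Φ γ K P := by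
  have hABK : (A + B * K)ᵀ * M * (A + B * K) ≤ (A + B * K)ᵀ * P * (A + B * K) := by
    simpa only [conjTranspose_eq_transpose_of_trivial] using
      conjTranspose_mul_mul_le_conjTranspose_mul_mul hMP (A + B * K)
  exact sub_le_sub_right (add_le_add_right hABK Φ) _

theorem eq_gainCost_add (hP : P.IsSymm) (hdet : IsUnit (disturbanceWeight B γ P).det)
    (K : Matrix (Fin m) (Fin n) ℝ) :
    Ric A B Φ γ P = gainCost A B Φ γ K P +
      (K - optimalGain A B γ P)ᵀ * disturbanceWeight B γ P * (K - optimalGain A B γ P) := by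
  have hRic : Ric A B Φ γ P =
      Φ + Aᵀ * P * A + (Bᵀ * P * A)ᵀ * (disturbanceWeight B γ P)⁻¹ * (Bᵀ * P * A) := by
    simp only [Ric, disturbanceWeight, transpose_mul, transpose_transpose, hP.eq,
      Matrix.mul_assoc]
  have hcost : gainCost A B Φ γ K P = Φ + Aᵀ * P * A +
      ((Bᵀ * P * A)ᵀ * K + Kᵀ * (Bᵀ * P * A) - Kᵀ * disturbanceWeight B γ P * K) := by
    simp only [gainCost, disturbanceWeight, transpose_add, transpose_mul, transpose_transpose,
      hP.eq, Matrix.add_mul, Matrix.mul_add, Matrix.sub_mul, Matrix.mul_sub, Matrix.mul_smul,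
      Matrix.smul_mul, Matrix.mul_one, Matrix.mul_assoc]
    abel
  rw [hRic, hcost, optimalGain, transpose_mul_nonsing_inv_mul_eq_complete_square
    (isSymm_disturbanceWeight hP) hdet _ K, add_assoc (Φ + Aᵀ * P * A)]

theorem eq_gainCost_optimalGain (hP : P.IsSymm)
    (hdet : IsUnit (disturbanceWeight B γ P).det) :
    Ric A B Φ γ P = gainCost A B Φ γ (optimalGain A B γ P) P := by
  simpa only [sub_self, Matrix.mul_zero, add_zero] using
    eq_gainCost_add A Φ hP hdet (optimalGain A B γ P)

theorem gainCost_le (hP : P.IsSymm) (hweight : (disturbanceWeight B γ P).PosDef)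
    (K : Matrix (Fin m) (Fin n) ℝ) : gainCost A B Φ γ K P ≤ Ric A B Φ γ P := by
  rw [eq_gainCost_add A Φ hP hweight.det_pos.ne'.isUnit K]
  refine le_add_of_nonneg_right (PosSemidef.nonneg ?_)
  simpa only [conjTranspose_eq_transpose_of_trivial] using
    hweight.posSemidef.conjTranspose_mul_mul_same (K - optimalGain A B γ P)

theorem mono (hM : M.IsSymm) (hMP : M ≤ P) (hweight : (disturbanceWeight B γ P).PosDef) :
    Ric A B Φ γ M ≤ Ric A B Φ γ P := by
  have hP : P.IsSymm :=
    isHermitian_iff_isSymm.mp (isHermitian_of_isHermitian_of_le (isHermitian_iff_isSymm.mpr hM) hMP)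
  have hweightM : (disturbanceWeight B γ M).PosDef :=
    posDef_of_posDef_of_le hweight (disturbanceWeight_anti hMP)
  calc
    Ric A B Φ γ M = gainCost A B Φ γ (optimalGain A B γ M) M :=
      eq_gainCost_optimalGain A Φ hM hweightM.det_pos.ne'.isUnit
    _ ≤ gainCost A B Φ γ (optimalGain A B γ M) P := gainCost_mono A Φ _ hMP
    _ ≤ Ric A B Φ γ P := gainCost_le A Φ hP hweight _

theorem le_iterate (hM : M.IsSymm) (hRic : M ≤ Ric A B Φ γ M) (hMP : M ≤ P) {k : ℕ}
    (hweight : ∀ i < k, (disturbanceWeight B γ ((Ric A B Φ γ)^[i] P)).PosDef) :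
    M ≤ (Ric A B Φ γ)^[k] P := by
  induction k with
  | zero => exact hMP
  | succ k ih =>
    have hMk : M ≤ (Ric A B Φ γ)^[k] P := ih fun i hi => hweight i (hi.trans k.lt_succ_self)
    rw [Function.iterate_succ_apply']
    exact hRic.trans (mono A Φ hM hMk (hweight k k.lt_succ_self))

end Ric

theorem riccati_iterate_above_M_general {n m : ℕ} (A : Matrix (Fin n) (Fin n) ℝ)
    (B : Matrix (Fin n) (Fin m) ℝ) (Φ : Matrix (Fin n) (Fin n) ℝ) (γ : ℝ)
    {M P₀ : Matrix (Fin n) (Fin n) ℝ} (hM : M.IsSymm) (hRic : (Ric A B Φ γ M - M).PosDef)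
    (hMP₀ : (P₀ - M).PosSemidef) {k : ℕ} (hk : 1 ≤ k)
    (hweight : ∀ i < k, (Ric.disturbanceWeight B γ ((Ric A B Φ γ)^[i] P₀)).PosDef) :
    ((Ric A B Φ γ)^[k] P₀ - M).PosDef := by
  obtain ⟨j, rfl⟩ := Nat.exists_eq_add_of_le' hk
  have hMj : M ≤ (Ric A B Φ γ)^[j] P₀ :=
    Ric.le_iterate A Φ hM (le_iff.mpr hRic.posSemidef) (le_iff.mpr hMP₀)
      fun i hi => hweight i (hi.trans j.lt_succ_self)
  rw [Function.iterate_succ_apply']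
  exact posDef_of_posDef_of_le hRic
    (sub_le_sub_right (Ric.mono A Φ hM hMj (hweight j j.lt_succ_self)) M)

/-- Invariance of the class of quadratics with Hessian above `M`:
if `P₀ − M > 0` then `R_k(P₀) − M > 0`. -/
theorem riccati_iterate_above_M {n m : ℕ}
    (A : Matrix (Fin n) (Fin n) ℝ) (B : Matrix (Fin n) (Fin m) ℝ)
    (Φ : Matrix (Fin n) (Fin n) ℝ) (hΦsymm : Φ.IsSymm) (hΦ : Φ.PosDef)
    (γ : ℝ) (hγ : 0 < γ)
    (M : Matrix (Fin n) (Fin n) ℝ) (hMsymm : M.IsSymm)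
    (hM1 : ∀ k : ℕ,
      (γ ^ 2 • (1 : Matrix (Fin m) (Fin m) ℝ) - Bᵀ * ((Ric A B Φ γ)^[k] M) * B).PosDef)
    (hM2 : (Ric A B Φ γ M - M).PosDef)
    (P₀ : Matrix (Fin n) (Fin n) ℝ) (hP₀symm : P₀.IsSymm) (hP₀M : (P₀ - M).PosDef)
    (k : ℕ) (hk : 1 ≤ k)
    (hP₀ : ∀ i < k,
      (γ ^ 2 • (1 : Matrix (Fin m) (Fin m) ℝ) - Bᵀ * ((Ric A B Φ γ)^[i] P₀) * B).PosDef) :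
    ((Ric A B Φ γ)^[k] P₀ - M).PosDef :=
  riccati_iterate_above_M_general A B Φ γ hMsymm hM2 hP₀M.posSemidef hk hP₀
end

section
/- One-step dynamic programming identity: Let P be a symmetric n×n real matrix such that γ²·I − BᵀPB is positive definite. Then for every x ∈ ℝⁿ, sup over w ∈ ℝ^m of { (1/2)xᵀΦx − (γ²/2)|w|² + (1/2)(Ax+Bw)ᵀP(Ax+Bw) } is attained and equals (1/2)xᵀ(R(P))x, where R(P) = Φ + AᵀPA + AᵀPB(γ²·I − BᵀPB)⁻¹BᵀPA. -/
open Matrix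

/-!
As a function of `(w, x)`, the objective is `-1/2` times the quadratic form of the block matrix

  `[[γ²I − BᵀPB, −BᵀPA], [−AᵀPB, −(Φ + AᵀPA)]]`.

Its upper left block is positive definite, so completing the square in `w` shows that the form,
minimized over `w`, is the quadratic form in `x` of the Schur complement of that block. This Schur
complement is `−R(P)`.
-/

theorem isLeast_range_star_dotProduct_fromBlocks_mulVec {K ι κ : Type*} [Fintype ι] [Fintype κ]
    [DecidableEq κ] [Field K] [PartialOrder K] [IsOrderedAddMonoid K] [StarRing K]
    {M : Matrix κ κ K} (hM : M.PosDef) (N : Matrix κ ι K) (D : Matrix ι ι K) (v : ι → K) :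
    IsLeast
      (Set.range fun u : κ → K => star (u ⊕ᵥ v) ⬝ᵥ fromBlocks M N Nᴴ D *ᵥ (u ⊕ᵥ v))
      (star v ⬝ᵥ (D - Nᴴ * M⁻¹ * N) *ᵥ v) := by
  let := hM.isUnit.invertible
  have completed_square (u : κ → K) :
      star (u ⊕ᵥ v) ⬝ᵥ fromBlocks M N Nᴴ D *ᵥ (u ⊕ᵥ v) =
        star (u + (M⁻¹ * N) *ᵥ v) ⬝ᵥ M *ᵥ (u + (M⁻¹ * N) *ᵥ v) +
          star v ⬝ᵥ (D - Nᴴ * M⁻¹ * N) *ᵥ v := by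
    simpa only [dotProduct_mulVec] using schur_complement_eq₁₁ N D u v hM.isHermitian
  simp only [completed_square]
  refine ⟨⟨-((M⁻¹ * N) *ᵥ v), by simp⟩, ?_⟩
  rintro _ ⟨u, rfl⟩
  exact le_add_of_nonneg_left (hM.posSemidef.dotProduct_mulVec_nonneg _)

theorem dotProduct_transpose_mul_mul_mulVec {R m n k l : Type*} [CommSemiring R] [Fintype m]
    [Fintype n] [Fintype k] [Fintype l] (C : Matrix k m R) (P : Matrix k l R) (E : Matrix l n R)
    (u : m → R) (v : n → R) :
    u ⬝ᵥ (Cᵀ * P * E) *ᵥ v = (C *ᵥ u) ⬝ᵥ P *ᵥ (E *ᵥ v) := by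
  rw [Matrix.mul_assoc, ← mulVec_mulVec, dotProduct_mulVec, vecMul_transpose, mulVec_mulVec]

theorem sumElim_dotProduct_fromBlocks_mulVec_eq_sub {R ι κ l : Type*} [CommRing R]
    [Fintype ι] [Fintype κ] [Fintype l] (A : Matrix l ι R) (B : Matrix l κ R)
    (Φ : Matrix ι ι R) (S : Matrix κ κ R) (P : Matrix l l R) (w : κ → R) (x : ι → R) :
    (w ⊕ᵥ x) ⬝ᵥ
        fromBlocks (S - Bᵀ * P * B) (-(Bᵀ * P * A)) (-(Aᵀ * P * B)) (-(Φ + Aᵀ * P * A)) *ᵥ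
          (w ⊕ᵥ x) =
      w ⬝ᵥ S *ᵥ w - x ⬝ᵥ Φ *ᵥ x - (A *ᵥ x + B *ᵥ w) ⬝ᵥ P *ᵥ (A *ᵥ x + B *ᵥ w) := by
  have block_eq :
      fromBlocks (S - Bᵀ * P * B) (-(Bᵀ * P * A)) (-(Aᵀ * P * B)) (-(Φ + Aᵀ * P * A)) =
        fromBlocks S 0 0 (-Φ) - (fromCols B A)ᵀ * P * fromCols B A := by
    rw [transpose_fromCols, fromRows_mul, fromRows_mul_fromCols]
    simp only [sub_eq_add_neg, fromBlocks_neg, fromBlocks_add, zero_add, neg_add]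
  rw [block_eq, sub_mulVec, dotProduct_sub, dotProduct_transpose_mul_mul_mulVec,
    fromCols_mulVec_sumElim, add_comm (B *ᵥ w)]
  simp [fromBlocks_mulVec, neg_mulVec, sub_eq_add_neg]

theorem one_step_dynamic_programming_general {ι κ l : Type*} [Fintype ι] [Fintype κ] [Fintype l]
    [DecidableEq κ] (A : Matrix l ι ℝ) (B : Matrix l κ ℝ) (Φ : Matrix ι ι ℝ) (S : Matrix κ κ ℝ)
    {P : Matrix l l ℝ} (hP : P.IsSymm) (hM : (S - Bᵀ * P * B).PosDef) (x : ι → ℝ) :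
    IsGreatest
      (Set.range fun w : κ → ℝ =>
        (1 / 2) * (x ⬝ᵥ Φ *ᵥ x) - (1 / 2) * (w ⬝ᵥ S *ᵥ w) +
          (1 / 2) * ((A *ᵥ x + B *ᵥ w) ⬝ᵥ P *ᵥ (A *ᵥ x + B *ᵥ w)))
      ((1 / 2) *
        (x ⬝ᵥ (Φ + Aᵀ * P * A + Aᵀ * P * B * (S - Bᵀ * P * B)⁻¹ * Bᵀ * P * A) *ᵥ x)) := by
  have conjTranspose_corner : (-(Bᵀ * P * A))ᴴ = -(Aᵀ * P * B) := by
    simp [conjTranspose_eq_transpose_of_trivial, transpose_mul, hP.eq, Matrix.mul_assoc]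
  have schur_complement_eq :
      -(Φ + Aᵀ * P * A) - -(Aᵀ * P * B) * (S - Bᵀ * P * B)⁻¹ * -(Bᵀ * P * A) =
        -(Φ + Aᵀ * P * A + Aᵀ * P * B * (S - Bᵀ * P * B)⁻¹ * Bᵀ * P * A) := by
    simp only [Matrix.neg_mul, Matrix.mul_neg, neg_neg, neg_add, sub_eq_add_neg, Matrix.mul_assoc]
  have least := isLeast_range_star_dotProduct_fromBlocks_mulVec hM (-(Bᵀ * P * A))
    (-(Φ + Aᵀ * P * A)) x
  simp only [conjTranspose_corner, schur_complement_eq, star_trivial, neg_mulVec, dotProduct_neg,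
    sumElim_dotProduct_fromBlocks_mulVec_eq_sub] at least
  obtain ⟨⟨w₀, value_at_w₀⟩, lower_bound⟩ := least
  simp only [mem_lowerBounds, Set.forall_mem_range] at value_at_w₀ lower_bound
  refine ⟨⟨w₀, by linarith⟩, Set.forall_mem_range.2 fun w => ?_⟩
  linarith [lower_bound w]

/-- One-step dynamic programming identity: the supremum over `w` of
`½xᵀΦx − (γ²/2)|w|² + ½(Ax+Bw)ᵀP(Ax+Bw)` is attained and equals `½xᵀR(P)x`. -/
theorem one_step_dynamic_programming {n m : ℕ}
    (A : Matrix (Fin n) (Fin n) ℝ) (B : Matrix (Fin n) (Fin m) ℝ)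
    (Φ : Matrix (Fin n) (Fin n) ℝ) (hΦsymm : Φ.IsSymm) (hΦ : Φ.PosDef)
    (γ : ℝ) (hγ : 0 < γ)
    (P : Matrix (Fin n) (Fin n) ℝ) (hPsymm : P.IsSymm)
    (hpd : (γ ^ 2 • (1 : Matrix (Fin m) (Fin m) ℝ) - Bᵀ * P * B).PosDef)
    (x : Fin n → ℝ) :
    IsGreatest
      (Set.range fun w : Fin m → ℝ =>
        (1 / 2) * (x ⬝ᵥ Φ *ᵥ x) - γ ^ 2 / 2 * (w ⬝ᵥ w) +
          (1 / 2) * ((A *ᵥ x + B *ᵥ w) ⬝ᵥ P *ᵥ (A *ᵥ x + B *ᵥ w)))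
      ((1 / 2) * (x ⬝ᵥ (Ric A B Φ γ P) *ᵥ x)) := by
  simpa only [Ric, smul_mulVec, one_mulVec, dotProduct_smul, smul_eq_mul, ← mul_assoc,
    one_div_mul_eq_div] using one_step_dynamic_programming_general A B Φ _ hPsymm hpd x
end

section
/- Quadratic form of the value function: Let P0 be a symmetric n×n real matrix, let k ≥ 0, and suppose γ²·I − Bᵀ(R_i(P0))B is positive definite for every 0 ≤ i ≤ k−1. Then for every x ∈ ℝⁿ the value function satisfies W_k(x) = (1/2)xᵀ(R_k(P0))x; in particular the supremum defining W_k(x) is finite. -/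
open Matrix

/-- The state trajectory `x₀ = x`, `x_{i+1} = A x_i + B w_i`. -/
noncomputable def traj {n m : ℕ} (A : Matrix (Fin n) (Fin n) ℝ) (B : Matrix (Fin n) (Fin m) ℝ)
    (x : Fin n → ℝ) (w : ℕ → Fin m → ℝ) : ℕ → Fin n → ℝ
  | 0 => x
  | i + 1 => A *ᵥ traj A B x w i + B *ᵥ w i

/-- The total payoff `J_k(x; w) = Σ_{i<k} (½x_iᵀΦx_i − (γ²/2)|w_i|²) + ½x_kᵀP₀x_k`. -/
noncomputable def payoff {n m : ℕ} (A : Matrix (Fin n) (Fin n) ℝ) (B : Matrix (Fin n) (Fin m) ℝ)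
    (Φ : Matrix (Fin n) (Fin n) ℝ) (γ : ℝ) (P₀ : Matrix (Fin n) (Fin n) ℝ) (k : ℕ)
    (x : Fin n → ℝ) (w : ℕ → Fin m → ℝ) : ℝ :=
  (∑ i ∈ Finset.range k,
      ((1 / 2) * (traj A B x w i ⬝ᵥ Φ *ᵥ traj A B x w i) - γ ^ 2 / 2 * (w i ⬝ᵥ w i))) +
    (1 / 2) * (traj A B x w k ⬝ᵥ P₀ *ᵥ traj A B x w k)

/-!
Dynamic programming: splitting off the first input, `W_{k+1}(x)` is the supremum over `u` of the
first-stage reward plus `W_k(Ax + Bu)`. If `W_k(y) = ½yᵀPy` with `P = R_k(P₀)` symmetric, the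
expression to be maximized is
`½xᵀΦx + ½(Ax)ᵀP(Ax) + uᵀb − ½uᵀMu` with `b = BᵀPAx` and `M = γ²I − BᵀPB`.
Since `M` is positive definite, completing the square shows that the maximum is attained at
`u = M⁻¹b` and contributes `½bᵀM⁻¹b`, which is the last term of `½xᵀR(P)x`.
-/

section ConcaveQuadratic

variable {ι R : Type*} [Fintype ι] [DecidableEq ι]

theorem two_mul_dotProduct_sub_quadratic_eq [CommRing R] {M : Matrix ι ι R} (hM : M.IsSymm)
    (hdet : IsUnit M.det) (b u : ι → R) :
    2 * (u ⬝ᵥ b) - u ⬝ᵥ M *ᵥ u =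
      b ⬝ᵥ M⁻¹ *ᵥ b - (u - M⁻¹ *ᵥ b) ⬝ᵥ M *ᵥ (u - M⁻¹ *ᵥ b) := by
  have mulVec_maximizer : M *ᵥ (M⁻¹ *ᵥ b) = b := by
    rw [mulVec_mulVec, mul_nonsing_inv M hdet, one_mulVec]
  have cross_term : (M⁻¹ *ᵥ b) ⬝ᵥ M *ᵥ u = u ⬝ᵥ b := by
    rw [← dotProduct_transpose_mulVec, hM.eq, mulVec_maximizer]
  rw [mulVec_sub, mulVec_maximizer, sub_dotProduct, dotProduct_sub, dotProduct_sub, cross_term,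
    dotProduct_comm (M⁻¹ *ᵥ b) b]
  ring

theorem isGreatest_range_dotProduct_sub_half_quadratic {M : Matrix ι ι ℝ} (hM : M.PosDef)
    (b : ι → ℝ) :
    IsGreatest (Set.range fun u : ι → ℝ => u ⬝ᵥ b - 1 / 2 * (u ⬝ᵥ M *ᵥ u))
      (1 / 2 * (b ⬝ᵥ M⁻¹ *ᵥ b)) := by
  have symm : M.IsSymm := isHermitian_iff_isSymm.mp hM.isHermitian
  have complete_square := two_mul_dotProduct_sub_quadratic_eq symm hM.det_pos.ne'.isUnit b
  constructor
  · refine ⟨M⁻¹ *ᵥ b, ?_⟩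
    have value := complete_square (M⁻¹ *ᵥ b)
    rw [sub_self, zero_dotProduct] at value
    dsimp only
    linarith
  · rintro _ ⟨u, rfl⟩
    have square_nonneg := hM.posSemidef.dotProduct_mulVec_nonneg (u - M⁻¹ *ᵥ b)
    rw [star_trivial] at square_nonneg
    dsimp only
    linarith [complete_square u]

end ConcaveQuadratic

section OneStep

variable {ι κ : Type*} [Fintype ι] [Fintype κ]

/-- The running reward `½xᵀΦx − (γ²/2)|u|²` collected in state `x` under the input `u`. -/
noncomputable def stageReward (Φ : Matrix ι ι ℝ) (γ : ℝ) (x : ι → ℝ) (u : κ → ℝ) : ℝ :=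
  1 / 2 * (x ⬝ᵥ Φ *ᵥ x) - γ ^ 2 / 2 * (u ⬝ᵥ u)

/-- The matrix `γ²I − BᵀPB`. It is minus the Hessian, with respect to the input, of the one-step
payoff with terminal reward `½yᵀPy`, so its positive definiteness is strict concavity in the
input. -/
noncomputable def inputPenalty [DecidableEq κ] (B : Matrix ι κ ℝ) (γ : ℝ) (P : Matrix ι ι ℝ) :
    Matrix κ κ ℝ :=
  γ ^ 2 • (1 : Matrix κ κ ℝ) - Bᵀ * P * B

theorem dotProduct_inputPenalty_mulVec [DecidableEq κ] (B : Matrix ι κ ℝ) (γ : ℝ)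
    (P : Matrix ι ι ℝ) (u : κ → ℝ) :
    u ⬝ᵥ inputPenalty B γ P *ᵥ u = γ ^ 2 * (u ⬝ᵥ u) - (B *ᵥ u) ⬝ᵥ P *ᵥ (B *ᵥ u) := by
  simp only [inputPenalty, sub_mulVec, smul_mulVec, one_mulVec, ← mulVec_mulVec, dotProduct_sub,
    dotProduct_smul, smul_eq_mul, dotProduct_transpose_mulVec, dotProduct_comm (B *ᵥ u)]

theorem stageReward_add_half_quadratic_eq [DecidableEq κ] (A : Matrix ι ι ℝ) (B : Matrix ι κ ℝ)
    (Φ : Matrix ι ι ℝ) (γ : ℝ) {P : Matrix ι ι ℝ} (hP : P.IsSymm) (x : ι → ℝ) (u : κ → ℝ) :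
    stageReward Φ γ x u + 1 / 2 * ((A *ᵥ x + B *ᵥ u) ⬝ᵥ P *ᵥ (A *ᵥ x + B *ᵥ u)) =
      1 / 2 * (x ⬝ᵥ Φ *ᵥ x) + 1 / 2 * ((A *ᵥ x) ⬝ᵥ P *ᵥ (A *ᵥ x)) +
        (u ⬝ᵥ Bᵀ *ᵥ (P *ᵥ (A *ᵥ x)) - 1 / 2 * (u ⬝ᵥ inputPenalty B γ P *ᵥ u)) := by
  have cross_terms : (A *ᵥ x) ⬝ᵥ P *ᵥ (B *ᵥ u) = (B *ᵥ u) ⬝ᵥ P *ᵥ (A *ᵥ x) := by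
    rw [← dotProduct_transpose_mulVec, hP.eq]
  rw [dotProduct_inputPenalty_mulVec, dotProduct_transpose_mulVec,
    dotProduct_comm (P *ᵥ (A *ᵥ x)), stageReward, mulVec_add, add_dotProduct, dotProduct_add,
    dotProduct_add, cross_terms]
  ring

end OneStep

section LinearSystem

variable {n m : ℕ} (A : Matrix (Fin n) (Fin n) ℝ) (B : Matrix (Fin n) (Fin m) ℝ)
  {Φ : Matrix (Fin n) (Fin n) ℝ} (γ : ℝ)

section Riccati

variable {P : Matrix (Fin n) (Fin n) ℝ}

theorem isSymm_Ric (hΦ : Φ.IsSymm) (hP : P.IsSymm) : (Ric A B Φ γ P).IsSymm := by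
  simp only [Ric, IsSymm, transpose_add, transpose_mul, transpose_nonsing_inv, transpose_sub,
    transpose_smul, transpose_one, transpose_transpose, hP.eq, hΦ.eq, Matrix.mul_assoc]

theorem isSymm_iterate_Ric (hΦ : Φ.IsSymm) (hP : P.IsSymm) (k : ℕ) :
    ((Ric A B Φ γ)^[k] P).IsSymm :=
  Function.Iterate.rec IsSymm hP (fun _ => isSymm_Ric A B γ hΦ) k

theorem dotProduct_Ric_mulVec (hP : P.IsSymm) (x : Fin n → ℝ) :
    x ⬝ᵥ Ric A B Φ γ P *ᵥ x =
      x ⬝ᵥ Φ *ᵥ x + (A *ᵥ x) ⬝ᵥ P *ᵥ (A *ᵥ x) +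
        (Bᵀ *ᵥ (P *ᵥ (A *ᵥ x))) ⬝ᵥ (inputPenalty B γ P)⁻¹ *ᵥ (Bᵀ *ᵥ (P *ᵥ (A *ᵥ x))) := by
  have adjoint (y : Fin m → ℝ) :
      x ⬝ᵥ Aᵀ *ᵥ (P *ᵥ (B *ᵥ y)) = (Bᵀ *ᵥ (P *ᵥ (A *ᵥ x))) ⬝ᵥ y := by
    rw [dotProduct_transpose_mulVec, dotProduct_comm, ← dotProduct_transpose_mulVec, hP.eq,
      dotProduct_comm, ← dotProduct_transpose_mulVec, dotProduct_comm]
  rw [Ric, ← inputPenalty]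
  simp only [add_mulVec, ← mulVec_mulVec, dotProduct_add, adjoint]
  rw [dotProduct_transpose_mulVec, dotProduct_comm (P *ᵥ (A *ᵥ x))]

theorem isGreatest_range_stageReward_add_half_quadratic (hP : P.IsSymm)
    (hpos : (inputPenalty B γ P).PosDef) (x : Fin n → ℝ) :
    IsGreatest
      (Set.range fun u : Fin m → ℝ =>
        stageReward Φ γ x u + 1 / 2 * ((A *ᵥ x + B *ᵥ u) ⬝ᵥ P *ᵥ (A *ᵥ x + B *ᵥ u)))
      (1 / 2 * (x ⬝ᵥ Ric A B Φ γ P *ᵥ x)) := by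
  simp only [stageReward_add_half_quadratic_eq A B Φ γ hP, dotProduct_Ric_mulVec A B γ hP,
    mul_add]
  have input_max := isGreatest_range_dotProduct_sub_half_quadratic hpos (Bᵀ *ᵥ (P *ᵥ (A *ᵥ x)))
  have translated := (add_right_mono (a := 1 / 2 * (x ⬝ᵥ Φ *ᵥ x) +
    1 / 2 * ((A *ᵥ x) ⬝ᵥ P *ᵥ (A *ᵥ x)))).map_isGreatest input_max
  rwa [← Set.range_comp] at translated

end Riccati

section DynamicProgramming

variable (P₀ : Matrix (Fin n) (Fin n) ℝ) (k : ℕ) (x : Fin n → ℝ) (w : ℕ → Fin m → ℝ)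

theorem traj_succ_eq_traj_shift (i : ℕ) :
    traj A B x w (i + 1) = traj A B (A *ᵥ x + B *ᵥ w 0) (fun j => w (j + 1)) i := by
  induction i with
  | zero => rfl
  | succ i ih => rw [traj, ih, traj]

theorem payoff_succ_eq_stageReward_add :
    payoff A B Φ γ P₀ (k + 1) x w =
      stageReward Φ γ x (w 0) +
        payoff A B Φ γ P₀ k (A *ᵥ x + B *ᵥ w 0) (fun i => w (i + 1)) := by
  have traj_zero : traj A B x w 0 = x := rfl
  simp only [payoff, Finset.sum_range_succ', traj_succ_eq_traj_shift A B x w, traj_zero,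
    stageReward]
  ring

variable {A B γ P₀ k x}

theorem isGreatest_range_payoff_succ {V : (Fin n → ℝ) → ℝ} {c : ℝ}
    (hV : ∀ y, IsGreatest (Set.range (payoff A B Φ γ P₀ k y)) (V y))
    (hc : IsGreatest (Set.range fun u => stageReward Φ γ x u + V (A *ᵥ x + B *ᵥ u)) c) :
    IsGreatest (Set.range (payoff A B Φ γ P₀ (k + 1) x)) c := by
  obtain ⟨⟨u, hu⟩, hub⟩ := hc
  constructor
  · obtain ⟨w, hw⟩ := (hV (A *ᵥ x + B *ᵥ u)).1
    refine ⟨fun i => Nat.casesOn i u w, ?_⟩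
    rw [payoff_succ_eq_stageReward_add, ← hu]
    exact congrArg (stageReward Φ γ x u + ·) hw
  · rintro _ ⟨w, rfl⟩
    calc payoff A B Φ γ P₀ (k + 1) x w
        = stageReward Φ γ x (w 0) +
            payoff A B Φ γ P₀ k (A *ᵥ x + B *ᵥ w 0) (fun i => w (i + 1)) :=
          payoff_succ_eq_stageReward_add A B γ P₀ k x w
      _ ≤ stageReward Φ γ x (w 0) + V (A *ᵥ x + B *ᵥ w 0) := by
          gcongr
          exact (hV _).2 ⟨_, rfl⟩
      _ ≤ c := hub ⟨w 0, rfl⟩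

end DynamicProgramming

theorem value_function_quadratic_general (hΦ : Φ.IsSymm) {P₀ : Matrix (Fin n) (Fin n) ℝ}
    (hP₀ : P₀.IsSymm) (k : ℕ)
    (hpos : ∀ i < k, (inputPenalty B γ ((Ric A B Φ γ)^[i] P₀)).PosDef) (x : Fin n → ℝ) :
    IsGreatest (Set.range (payoff A B Φ γ P₀ k x))
      (1 / 2 * (x ⬝ᵥ (Ric A B Φ γ)^[k] P₀ *ᵥ x)) := by
  induction k generalizing x with
  | zero =>
    have payoff_zero : payoff A B Φ γ P₀ 0 x = fun _ => 1 / 2 * (x ⬝ᵥ P₀ *ᵥ x) := by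
      funext w
      simp [payoff, traj]
    rw [payoff_zero, Set.range_const]
    exact isGreatest_singleton
  | succ k ih =>
    rw [Function.iterate_succ_apply']
    exact isGreatest_range_payoff_succ
      (ih fun i hi => hpos i (hi.trans k.lt_succ_self))
      (isGreatest_range_stageReward_add_half_quadratic A B γ
        (isSymm_iterate_Ric A B γ hΦ hP₀ k) (hpos k k.lt_succ_self) x)

end LinearSystem

/-- Quadratic form of the value function: `W_k(x) = ½xᵀR_k(P₀)x`, the supremum
defining `W_k(x)` being finite (note the payoff only depends on `w₀,…,w_{k−1}`). -/
theorem value_function_quadratic {n m : ℕ}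
    (A : Matrix (Fin n) (Fin n) ℝ) (B : Matrix (Fin n) (Fin m) ℝ)
    (Φ : Matrix (Fin n) (Fin n) ℝ) (hΦsymm : Φ.IsSymm) (hΦ : Φ.PosDef)
    (γ : ℝ) (hγ : 0 < γ)
    (P₀ : Matrix (Fin n) (Fin n) ℝ) (hP₀symm : P₀.IsSymm) (k : ℕ)
    (hP₀ : ∀ i < k,
      (γ ^ 2 • (1 : Matrix (Fin m) (Fin m) ℝ) - Bᵀ * ((Ric A B Φ γ)^[i] P₀) * B).PosDef)
    (x : Fin n → ℝ) :
    IsLUB (Set.range fun w : ℕ → Fin m → ℝ => payoff A B Φ γ P₀ k x w)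
      ((1 / 2) * (x ⬝ᵥ ((Ric A B Φ γ)^[k] P₀) *ᵥ x)) :=
  (value_function_quadratic_general A B γ hΦsymm hP₀symm k hP₀ x).isLUB
end

section
/- Inversion of the max-plus duality transform: Let M be a symmetric invertible n×n real matrix, let φ : ℝⁿ → ℝ be such that x ↦ φ(x) − (1/2)xᵀMx is convex on ℝⁿ, and suppose that for every z ∈ ℝⁿ the quantity (D_ψφ)(z) := −sup_{x∈ℝⁿ} { (1/2)(x−z)ᵀM(x−z) − φ(x) } is finite. Then for every x ∈ ℝⁿ, sup_{z∈ℝⁿ} { (1/2)(x−z)ᵀM(x−z) + (D_ψφ)(z) } = φ(x). -/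
open Matrix

/-!
Expanding the square, `½ B(y - z, y - z)` differs from `½ B(y, y)` by a function of `y` that is
affine with linear part `-B(z, y)`. Hence, if `l` is a subgradient of the convex function
`φ - ½ B(·, ·)` at `x` and `z` solves `B(z, ·) = -l`, then `y ↦ ½ B(y - z, y - z) - φ y` is
maximal at `y = x`. So the dual at this `z` is finite and equal to `φ x - ½ B(x - z, x - z)`,
which means that the supremum defining the inverse transform is attained there, with value `φ x`.
-/

open Set

section MaxplusDual

variable {X Z : Type*}

/-- The max-plus dual `D_ψ φ` of `φ` with respect to the kernel `ψ`. The supremum is taken in `ℝ`,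
so the value is meaningful only on `maxplusDualDomain ψ φ`; elsewhere it is the junk value `0`. -/
noncomputable def maxplusDual (ψ : X → Z → ℝ) (φ : X → ℝ) (z : Z) : ℝ :=
  -⨆ x, ψ x z - φ x

/-- The effective domain of the max-plus dual: the points `z` at which `D_ψ φ` is not `-∞`. -/
def maxplusDualDomain (ψ : X → Z → ℝ) (φ : X → ℝ) : Set Z :=
  {z | BddAbove (range fun x => ψ x z - φ x)}

variable {ψ : X → Z → ℝ} {φ : X → ℝ} {x : X} {z : Z}

theorem kernel_add_maxplusDual_le (hz : z ∈ maxplusDualDomain ψ φ) (x : X) :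
    ψ x z + maxplusDual ψ φ z ≤ φ x := by
  have hle : ψ x z - φ x ≤ ⨆ x', ψ x' z - φ x' := le_ciSup hz x
  rw [maxplusDual]
  linarith

theorem mem_maxplusDualDomain_of_forall_le (hmax : ∀ y, ψ y z - φ y ≤ ψ x z - φ x) :
    z ∈ maxplusDualDomain ψ φ :=
  ⟨ψ x z - φ x, forall_mem_range.2 hmax⟩

theorem le_kernel_add_maxplusDual_of_forall_le (hmax : ∀ y, ψ y z - φ y ≤ ψ x z - φ x) :
    φ x ≤ ψ x z + maxplusDual ψ φ z := by
  have : Nonempty X := ⟨x⟩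
  have hsup : ⨆ y, ψ y z - φ y ≤ ψ x z - φ x := ciSup_le hmax
  rw [maxplusDual]
  linarith

theorem isGreatest_kernel_add_maxplusDual (hmax : ∀ y, ψ y z - φ y ≤ ψ x z - φ x) :
    IsGreatest ((fun z => ψ x z + maxplusDual ψ φ z) '' maxplusDualDomain ψ φ) (φ x) := by
  have hz : z ∈ maxplusDualDomain ψ φ := mem_maxplusDualDomain_of_forall_le hmax
  refine ⟨⟨z, hz, ?_⟩, forall_mem_image.2 fun w hw => kernel_add_maxplusDual_le hw x⟩
  exact (kernel_add_maxplusDual_le hz x).antisymm (le_kernel_add_maxplusDual_of_forall_le hmax)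

end MaxplusDual

theorem isOpen_strict_epigraph {X β : Type*} [TopologicalSpace X] [TopologicalSpace β]
    [LinearOrder β] [OrderClosedTopology β] {s : Set X} {f : X → β} (hs : IsOpen s)
    (hf : ContinuousOn f s) : IsOpen {p : X × β | p.1 ∈ s ∧ f p.1 < p.2} := by
  have hcont : ContinuousOn (fun p : X × β => (f p.1, p.2)) (Prod.fst ⁻¹' s) :=
    (hf.comp continuousOn_fst fun _ hp => hp).prodMk continuousOn_snd
  exact hcont.isOpen_inter_preimage (hs.preimage continuous_fst) isOpen_lt_prod

/-- A nonvertical hyperplane separating `(x, f x)` from the strict epigraph of `f` is the graph of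
an affine minorant of `f` that is exact at `x`. -/
theorem exists_subgradient_of_convexOn {E : Type*} [AddCommGroup E] [Module ℝ E]
    [TopologicalSpace E] [IsTopologicalAddGroup E] [ContinuousSMul ℝ E] {s : Set E} {f : E → ℝ}
    (hs : IsOpen s) (hconv : ConvexOn ℝ s f) (hcont : ContinuousOn f s) {x : E} (hx : x ∈ s) :
    ∃ l : StrongDual ℝ E, ∀ y ∈ s, f x + l (y - x) ≤ f y := by
  obtain ⟨L, hL⟩ := geometric_hahn_banach_open_point (x := (x, f x))
    hconv.convex_strict_epigraph (isOpen_strict_epigraph hs hcont) (by simp)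
  have L_apply (v : E) (t : ℝ) : L (v, t) = L (v, 0) + t * L (0, 1) := by
    rw [← smul_eq_mul, ← map_smul, ← map_add]
    simp
  have separation {y : E} (hy : y ∈ s) {t : ℝ} (ht : f y < t) :
      L (y - x, 0) + (t - f x) * L (0, 1) < 0 := by
    rw [← L_apply, ← Prod.mk_sub_mk, map_sub, sub_neg]
    exact hL (y, t) ⟨hy, ht⟩
  have nonvertical : 0 < -L (0, 1) := by
    simpa [Prod.mk_zero_zero] using separation hx (lt_add_one (f x))
  refine ⟨(-L (0, 1))⁻¹ • L.comp (.inl ℝ E ℝ), fun y hy => le_of_forall_gt fun t ht => ?_⟩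
  have hlt : (-L (0, 1))⁻¹ * L (y - x, 0) < t - f x := by
    rw [inv_mul_lt_iff₀ nonvertical]
    linarith [separation hy ht]
  exact lt_sub_iff_add_lt'.1 hlt

section QuadraticKernel

variable {E : Type*} [AddCommGroup E] [Module ℝ E]

/-- The kernel `ψ(x, z) = ½ B(x - z, x - z)` of the max-plus duality attached to a bilinear form
`B`. -/
noncomputable def quadraticKernel (B : LinearMap.BilinForm ℝ E) (x z : E) : ℝ :=
  1 / 2 * B (x - z) (x - z)

variable {B : LinearMap.BilinForm ℝ E}

theorem quadraticKernel_eq (hB : B.IsSymm) (x z : E) :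
    quadraticKernel B x z = 1 / 2 * B x x - B z x + 1 / 2 * B z z := by
  rw [quadraticKernel, B.sub_left, B.sub_right, B.sub_right, hB.eq x z]
  ring

theorem quadraticKernel_sub_le_of_subgradient (hB : B.IsSymm) {φ : E → ℝ} {x z : E}
    (hz : ∀ y, (φ x - 1 / 2 * B x x) - B z (y - x) ≤ φ y - 1 / 2 * B y y) (y : E) :
    quadraticKernel B y z - φ y ≤ quadraticKernel B x z - φ x := by
  have hsupp := hz y
  rw [B.sub_right] at hsupp
  rw [quadraticKernel_eq hB, quadraticKernel_eq hB]
  linarith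

end QuadraticKernel

theorem nondegenerate_toBilin'_of_isUnit {ι K : Type*} [Fintype ι] [DecidableEq ι] [Field K]
    {M : Matrix ι ι K} (hM : IsUnit M) : M.toBilin'.Nondegenerate :=
  (nondegenerate_of_det_ne_zero ((M.isUnit_iff_isUnit_det.1 hM).ne_zero)).toBilin'

theorem maxplus_dual_inversion_general {E : Type*} [AddCommGroup E] [Module ℝ E]
    [TopologicalSpace E] [IsTopologicalAddGroup E] [ContinuousSMul ℝ E]
    {B : LinearMap.BilinForm ℝ E} (hsymm : B.IsSymm)
    (hsurj : ∀ l : StrongDual ℝ E, ∃ z, B z = (l : E →ₗ[ℝ] ℝ)) {φ : E → ℝ}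
    (hconv : ConvexOn ℝ univ fun x => φ x - 1 / 2 * B x x)
    (hcont : Continuous fun x => φ x - 1 / 2 * B x x) (x : E) :
    IsGreatest
      ((fun z => quadraticKernel B x z + maxplusDual (quadraticKernel B) φ z) ''
        maxplusDualDomain (quadraticKernel B) φ)
      (φ x) := by
  obtain ⟨l, hl⟩ := exists_subgradient_of_convexOn isOpen_univ hconv hcont.continuousOn
    (mem_univ x)
  obtain ⟨z, hz⟩ := hsurj (-l)
  refine isGreatest_kernel_add_maxplusDual (z := z)
    (quadraticKernel_sub_le_of_subgradient hsymm fun y => ?_)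
  have hzl : B z (y - x) = -l (y - x) := by rw [hz]; rfl
  rw [hzl, sub_neg_eq_add]
  exact hl y (mem_univ y)

/-- Inversion of the max-plus duality transform: for `M` symmetric invertible and
`φ − ½⟨·,M·⟩` convex, with `(D_ψφ)(z) = −sup_x {½(x−z)ᵀM(x−z) − φ(x)}` finite for all `z`,
one has `sup_z {½(x−z)ᵀM(x−z) + (D_ψφ)(z)} = φ(x)` for every `x`. -/
theorem maxplus_dual_inversion {n : ℕ}
    (M : Matrix (Fin n) (Fin n) ℝ) (hMsymm : M.IsSymm) (hMinv : IsUnit M)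
    (φ : (Fin n → ℝ) → ℝ)
    (hconv : ConvexOn ℝ Set.univ fun x => φ x - (1 / 2) * (x ⬝ᵥ M *ᵥ x))
    (hbdd : ∀ z : Fin n → ℝ,
      BddAbove (Set.range fun x : Fin n → ℝ =>
        (1 / 2) * ((x - z) ⬝ᵥ M *ᵥ (x - z)) - φ x))
    (x : Fin n → ℝ) :
    IsLUB
      (Set.range fun z : Fin n → ℝ =>
        (1 / 2) * ((x - z) ⬝ᵥ M *ᵥ (x - z)) +
          (-(⨆ x' : Fin n → ℝ, (1 / 2) * ((x' - z) ⬝ᵥ M *ᵥ (x' - z)) - φ x')))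
      (φ x) := by
  simp only [← toBilin'_apply'] at hconv hbdd ⊢
  have hdom : maxplusDualDomain (quadraticKernel M.toBilin') φ = univ := eq_univ_of_forall hbdd
  have hmax := maxplus_dual_inversion_general (isSymm_toBilin'_iff_isSymm.2 hMsymm)
    (fun l => (M.toBilin'.toDual (nondegenerate_toBilin'_of_isUnit hMinv)).surjective l)
    hconv (continuousOn_univ.1 (hconv.continuousOn isOpen_univ)) x
  rw [hdom, image_univ] at hmax
  exact hmax.isLUB
end

section
/- Dual of a quadratic (Theorem characterizing ran(D_ψ)): Let M and Ω be symmetric n×n real matrices with Ω − M positive definite. Then for every z ∈ ℝⁿ, −sup_{x∈ℝⁿ} { (1/2)(x−z)ᵀM(x−z) − (1/2)xᵀΩx } = (1/2)zᵀ( M(M−Ω)⁻¹M − M )z; in particular the supremum is finite and the max-plus dual of the quadratic x ↦ (1/2)xᵀΩx is the quadratic z ↦ (1/2)zᵀΥ(Ω)z with Υ(Ω) = M(M−Ω)⁻¹M − M. -/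
open Matrix

/-! With `A = Ω - M`, expanding `(x - z)ᵀM(x - z)` gives
`(x - z)ᵀM(x - z) - xᵀΩx = zᵀMz - (xᵀAx - 2xᵀb)` where `b = -Mz`. If `Aw = b`, completing the square
gives `xᵀAx - 2xᵀb = (x - w)ᵀA(x - w) - wᵀb`, whose minimum, attained at `x = w`, is `-wᵀb`.
Here `w = A⁻¹b = (M - Ω)⁻¹Mz`. -/

theorem dotProduct_mulVec_comm_of_isSymm {ι R : Type*} [Fintype ι] [CommSemiring R]
    {A : Matrix ι ι R} (hA : A.IsSymm) (x y : ι → R) : x ⬝ᵥ A *ᵥ y = y ⬝ᵥ A *ᵥ x := by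
  rw [← dotProduct_transpose_mulVec, hA.eq]

section CommRing

variable {ι R : Type*} [Fintype ι] [CommRing R]

theorem sub_dotProduct_mulVec_sub_of_isSymm {A : Matrix ι ι R} (hA : A.IsSymm) (x y : ι → R) :
    (x - y) ⬝ᵥ A *ᵥ (x - y) = x ⬝ᵥ A *ᵥ x - 2 * (x ⬝ᵥ A *ᵥ y) + y ⬝ᵥ A *ᵥ y := by
  simp only [mulVec_sub, dotProduct_sub, sub_dotProduct, dotProduct_mulVec_comm_of_isSymm hA y x]
  ring

theorem dotProduct_mulVec_sub_two_mul_eq_of_mulVec_eq {A : Matrix ι ι R} (hA : A.IsSymm)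
    {w b : ι → R} (hw : A *ᵥ w = b) (x : ι → R) :
    x ⬝ᵥ A *ᵥ x - 2 * (x ⬝ᵥ b) = (x - w) ⬝ᵥ A *ᵥ (x - w) - w ⬝ᵥ b := by
  rw [sub_dotProduct_mulVec_sub_of_isSymm hA, hw]
  ring

theorem isLeast_range_dotProduct_mulVec_sub_two_mul [PartialOrder R] [IsOrderedAddMonoid R]
    [StarRing R] [TrivialStar R] {A : Matrix ι ι R} (hA : A.PosSemidef) {w b : ι → R}
    (hw : A *ᵥ w = b) :
    IsLeast (Set.range fun x : ι → R => x ⬝ᵥ A *ᵥ x - 2 * (x ⬝ᵥ b)) (-(w ⬝ᵥ b)) := by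
  have complete_square :=
    dotProduct_mulVec_sub_two_mul_eq_of_mulVec_eq (isHermitian_iff_isSymm.mp hA.isHermitian) hw
  simp only [complete_square]
  refine ⟨⟨w, by simp⟩, ?_⟩
  rintro _ ⟨x, rfl⟩
  have square_nonneg : 0 ≤ (x - w) ⬝ᵥ A *ᵥ (x - w) := by
    simpa only [star_trivial] using hA.dotProduct_mulVec_nonneg (x - w)
  simpa only [zero_sub] using sub_le_sub_right square_nonneg (w ⬝ᵥ b)

theorem sub_dotProduct_mulVec_sub_sub_dotProduct_mulVec {M : Matrix ι ι R} (hM : M.IsSymm)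
    (Ω : Matrix ι ι R) (x z : ι → R) :
    (x - z) ⬝ᵥ M *ᵥ (x - z) - x ⬝ᵥ Ω *ᵥ x =
      z ⬝ᵥ M *ᵥ z - (x ⬝ᵥ (Ω - M) *ᵥ x - 2 * (x ⬝ᵥ -(M *ᵥ z))) := by
  rw [sub_dotProduct_mulVec_sub_of_isSymm hM, sub_mulVec, dotProduct_sub, dotProduct_neg]
  ring

theorem sub_mulVec_inv_sub_mulVec [DecidableEq ι] {M Ω : Matrix ι ι R} (h : IsUnit (Ω - M))
    (v : ι → R) : (Ω - M) *ᵥ ((M - Ω)⁻¹ *ᵥ v) = -v := by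
  have hdet : IsUnit (M - Ω).det := (isUnit_iff_isUnit_det _).mp (neg_sub Ω M ▸ h.neg)
  rw [← neg_sub M Ω, neg_mulVec, mulVec_mulVec, mul_nonsing_inv _ hdet, one_mulVec]

end CommRing

theorem maxplus_dual_of_quadratic_general {ι 𝕜 : Type*} [Fintype ι] [DecidableEq ι] [Field 𝕜]
    [LinearOrder 𝕜] [IsStrictOrderedRing 𝕜] [StarRing 𝕜] [TrivialStar 𝕜] {M Ω : Matrix ι ι 𝕜}
    (hM : M.IsSymm) (hΩM : (Ω - M).PosDef) (z : ι → 𝕜) :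
    IsGreatest
      (Set.range fun x : ι → 𝕜 =>
        (1 / 2) * ((x - z) ⬝ᵥ M *ᵥ (x - z)) - (1 / 2) * (x ⬝ᵥ Ω *ᵥ x))
      (-((1 / 2) * (z ⬝ᵥ (M * (M - Ω)⁻¹ * M - M) *ᵥ z))) := by
  set w := (M - Ω)⁻¹ *ᵥ (M *ᵥ z) with hw
  have critical : (Ω - M) *ᵥ w = -(M *ᵥ z) := sub_mulVec_inv_sub_mulVec hΩM.isUnit _
  have value : z ⬝ᵥ (M * (M - Ω)⁻¹ * M - M) *ᵥ z = w ⬝ᵥ M *ᵥ z - z ⬝ᵥ M *ᵥ z := by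
    rw [sub_mulVec, dotProduct_sub, ← mulVec_mulVec, ← mulVec_mulVec, ← hw,
      dotProduct_mulVec_comm_of_isSymm hM]
  have antitone : Antitone fun t : 𝕜 => (1 / 2) * (z ⬝ᵥ M *ᵥ z - t) := fun s t hst => by
    dsimp only
    gcongr
  convert antitone.map_isLeast
    (isLeast_range_dotProduct_mulVec_sub_two_mul hΩM.posSemidef critical) using 1
  · simp only [← Set.range_comp, Function.comp_def, ← mul_sub,
      sub_dotProduct_mulVec_sub_sub_dotProduct_mulVec hM]
  · rw [value, dotProduct_neg]
    ring

/-- Dual of a quadratic: for `Ω − M` positive definite,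
`sup_x {½(x−z)ᵀM(x−z) − ½xᵀΩx}` is finite with value `−½zᵀ(M(M−Ω)⁻¹M − M)z`,
i.e. the max-plus dual of `½xᵀΩx` is `½zᵀΥ(Ω)z` with `Υ(Ω) = M(M−Ω)⁻¹M − M`. -/
theorem maxplus_dual_of_quadratic {n : ℕ}
    (M Ω : Matrix (Fin n) (Fin n) ℝ) (hMsymm : M.IsSymm) (hΩsymm : Ω.IsSymm)
    (hΩM : (Ω - M).PosDef) (z : Fin n → ℝ) :
    IsLUB
      (Set.range fun x : Fin n → ℝ =>
        (1 / 2) * ((x - z) ⬝ᵥ M *ᵥ (x - z)) - (1 / 2) * (x ⬝ᵥ Ω *ᵥ x))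
      (-((1 / 2) * (z ⬝ᵥ (M * (M - Ω)⁻¹ * M - M) *ᵥ z))) := by
  exact (maxplus_dual_of_quadratic_general hMsymm hΩM z).isLUB
end

section
/- Inverse dual of a quadratic (Corollary on the duality between the primal and dual quadratic classes): Let M and Λ be symmetric n×n real matrices with M + Λ negative definite. Then for every x ∈ ℝⁿ, sup_{z∈ℝⁿ} { (1/2)(x−z)ᵀM(x−z) + (1/2)zᵀΛz } = (1/2)xᵀ( M − M(M+Λ)⁻¹M )x; in particular the supremum is finite and the inverse max-plus dual of the quadratic z ↦ (1/2)zᵀΛz is the quadratic x ↦ (1/2)xᵀΥ⁻¹(Λ)x with Υ⁻¹(Λ) = −M(M+Λ)⁻¹M + M. -/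
open Matrix

/-!
Put `S = M + Λ` and write `u*` for the conjugate transpose. Up to the factor `1 / 2`, the function
to be maximized is a quadratic polynomial in `z` with leading form `S`, stationary where
`S w = M x`. Completing the square there writes it as `x* M (x - w) + (z - w)* S (z - w)`. As
`S ≤ 0`, the maximum is attained at `z = w`, and substituting `w = S⁻¹ M x` turns the maximal value
into `x* (M - M S⁻¹ M) x`.
-/

theorem mulVec_sub_mul_mul_self {ι κ R : Type*} [Fintype ι] [Fintype κ] [NonUnitalRing R]
    (A : Matrix ι κ R) (B : Matrix κ ι R) (x : κ → R) :
    (A - A * B * A) *ᵥ x = A *ᵥ (x - B *ᵥ A *ᵥ x) := by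
  simp only [sub_mulVec, mulVec_sub, mulVec_mulVec, Matrix.mul_assoc]

theorem star_mulVec_dotProduct_of_isHermitian {ι R : Type*} [Fintype ι] [NonUnitalSemiring R]
    [StarRing R] {A : Matrix ι ι R} (hA : A.IsHermitian) (u v : ι → R) :
    star (A *ᵥ u) ⬝ᵥ v = star u ⬝ᵥ A *ᵥ v := by
  rw [star_mulVec, hA.eq, ← dotProduct_mulVec]

theorem quadratic_add_quadratic_eq_complete_square {ι R : Type*} [Fintype ι] [NonUnitalRing R]
    [StarRing R] {M Λ : Matrix ι ι R} (hM : M.IsHermitian) (hMΛ : (M + Λ).IsHermitian)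
    {x w : ι → R} (hw : (M + Λ) *ᵥ w = M *ᵥ x) (z : ι → R) :
    star (x - z) ⬝ᵥ M *ᵥ (x - z) + star z ⬝ᵥ Λ *ᵥ z =
      star x ⬝ᵥ M *ᵥ (x - w) + star (z - w) ⬝ᵥ (M + Λ) *ᵥ (z - w) := by
  have cross_term (v : ι → R) : star w ⬝ᵥ (M + Λ) *ᵥ v = star x ⬝ᵥ M *ᵥ v := by
    rw [← star_mulVec_dotProduct_of_isHermitian hMΛ, hw,
      star_mulVec_dotProduct_of_isHermitian hM]
  have square_expansion : star (z - w) ⬝ᵥ (M + Λ) *ᵥ (z - w) =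
      star z ⬝ᵥ (M + Λ) *ᵥ z - star z ⬝ᵥ M *ᵥ x - star x ⬝ᵥ M *ᵥ (z - w) := by
    rw [star_sub, sub_dotProduct, cross_term, mulVec_sub, hw, dotProduct_sub]
  rw [square_expansion]
  simp only [star_sub, sub_dotProduct, mulVec_sub, dotProduct_sub, add_mulVec, dotProduct_add]
  abel

theorem isGreatest_range_quadratic_add_quadratic {ι R : Type*} [Fintype ι] [Ring R]
    [PartialOrder R] [StarRing R] [AddLeftMono R] {M Λ : Matrix ι ι R} (hM : M.IsHermitian)
    (hMΛ : (-(M + Λ)).PosSemidef) {x w : ι → R} (hw : (M + Λ) *ᵥ w = M *ᵥ x) :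
    IsGreatest
      (Set.range fun z : ι → R => star (x - z) ⬝ᵥ M *ᵥ (x - z) + star z ⬝ᵥ Λ *ᵥ z)
      (star x ⬝ᵥ M *ᵥ (x - w)) := by
  have complete_square :=
    quadratic_add_quadratic_eq_complete_square hM (isHermitian_neg_iff.mp hMΛ.isHermitian) hw
  simp only [complete_square]
  refine ⟨⟨w, by simp⟩, Set.forall_mem_range.mpr fun z => add_le_of_nonpos_right ?_⟩
  simpa only [neg_mulVec, dotProduct_neg, neg_nonneg] using hMΛ.dotProduct_mulVec_nonneg (z - w)

theorem one_half_nonneg_of_starOrderedRing (K : Type*) [Field K] [PartialOrder K] [StarRing K]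
    [StarOrderedRing K] : (0 : K) ≤ 1 / 2 := by
  simpa [mul_assoc] using star_left_conjugate_nonneg (zero_le_two (α := K)) (2⁻¹ : K)

theorem maxplus_inverse_dual_of_quadratic_general {ι K : Type*} [Fintype ι] [DecidableEq ι]
    [Field K] [PartialOrder K] [StarRing K] [StarOrderedRing K] {M Λ : Matrix ι ι K}
    (hM : M.IsHermitian) (hMΛ : (-(M + Λ)).PosDef) (x : ι → K) :
    IsGreatest
      (Set.range fun z : ι → K =>
        (1 / 2) * (star (x - z) ⬝ᵥ M *ᵥ (x - z)) + (1 / 2) * (star z ⬝ᵥ Λ *ᵥ z))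
      ((1 / 2) * (star x ⬝ᵥ (M - M * (M + Λ)⁻¹ * M) *ᵥ x)) := by
  have isUnit_det : IsUnit (M + Λ).det :=
    (isUnit_iff_isUnit_det _).mp (IsUnit.neg_iff _ |>.mp hMΛ.isUnit)
  have stationary : (M + Λ) *ᵥ (M + Λ)⁻¹ *ᵥ M *ᵥ x = M *ᵥ x := by
    rw [mulVec_mulVec, mul_nonsing_inv _ isUnit_det, one_mulVec]
  have half_mul_mono : Monotone fun a : K => (1 / 2) * a := fun _ _ h =>
    mul_le_mul_of_nonneg_left h (one_half_nonneg_of_starOrderedRing K)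
  have scaled := half_mul_mono.map_isGreatest
    (isGreatest_range_quadratic_add_quadratic hM hMΛ.posSemidef stationary)
  simpa only [← Set.range_comp, Function.comp_def, mul_add, mulVec_sub_mul_mul_self] using scaled

/-- Inverse dual of a quadratic: for `M + Λ` negative definite,
`sup_z {½(x−z)ᵀM(x−z) + ½zᵀΛz}` is finite with value `½xᵀ(M − M(M+Λ)⁻¹M)x`,
i.e. the inverse max-plus dual of `½zᵀΛz` is `½xᵀΥ⁻¹(Λ)x` with
`Υ⁻¹(Λ) = −M(M+Λ)⁻¹M + M`. -/
theorem maxplus_inverse_dual_of_quadratic {n : ℕ}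
    (M Λ : Matrix (Fin n) (Fin n) ℝ) (hMsymm : M.IsSymm) (hΛsymm : Λ.IsSymm)
    (hMΛ : (-(M + Λ)).PosDef) (x : Fin n → ℝ) :
    IsLUB
      (Set.range fun z : Fin n → ℝ =>
        (1 / 2) * ((x - z) ⬝ᵥ M *ᵥ (x - z)) + (1 / 2) * (z ⬝ᵥ Λ *ᵥ z))
      ((1 / 2) * (x ⬝ᵥ (M - M * (M + Λ)⁻¹ * M) *ᵥ x)) := by
  simpa only [star_trivial] using
    (maxplus_inverse_dual_of_quadratic_general (isHermitian_iff_isSymm.mpr hMsymm) hMΛ x).isLUB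
end

section
/- Semigroup property of the primal kernels (Theorem on propagation of S_k and Λ_k): Assume M is a symmetric n×n real matrix satisfying: γ²·I − Bᵀ(R_k(M))B is positive definite for all k ≥ 0, R(M) − M is positive definite, and MB(γ²·I − BᵀMB)⁻¹BᵀM is positive definite. Fix k₁, k₂ ≥ 1 and suppose that for k ∈ {k₁, k₂, k₁+k₂} the auxiliary value function Ŝ_k(x,z) := (S_k ψ(·,z))(x) is finite and quadratic, Ŝ_k(x,z) = (1/2)[x;z]ᵀQ_k[x;z], with Q_k²² − M positive definite, and define the primal kernel S_k(x,y) := −sup_{z∈ℝⁿ} { (1/2)(z−y)ᵀM(z−y) − Ŝ_k(x,z) }, which is quadratic, S_k(x,y) = (1/2)[x;y]ᵀΛ_k[x;y], with symmetric Hessian Λ_k. Suppose further Λ_{k₁}²² + Λ_{k₂}¹¹ is negative definite. Then for all x,y ∈ ℝⁿ, S_{k₁+k₂}(x,y) = sup_{ρ∈ℝⁿ} { S_{k₁}(x,ρ) + S_{k₂}(ρ,y) }, and consequently Λ_{k₁+k₂} = Λ_{k₁} ⊛ Λ_{k₂}. -/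
open Matrix

/-- The one-step dynamic programming evolution operator on extended-real-valued functions:
`(Sφ)(x) = sup_w {½xᵀΦx − (γ²/2)|w|² + φ(Ax+Bw)}`. -/
noncomputable def DP {n m : ℕ} (A : Matrix (Fin n) (Fin n) ℝ) (B : Matrix (Fin n) (Fin m) ℝ)
    (Φ : Matrix (Fin n) (Fin n) ℝ) (γ : ℝ) (φ : (Fin n → ℝ) → EReal) :
    (Fin n → ℝ) → EReal :=
  fun x => ⨆ w : Fin m → ℝ,
    (((1 / 2) * (x ⬝ᵥ Φ *ᵥ x) - γ ^ 2 / 2 * (w ⬝ᵥ w) : ℝ) : EReal) + φ (A *ᵥ x + B *ᵥ w)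

/-- The primal-space kernel `S_k(x,y) = −sup_z {½(z−y)ᵀM(z−y) − Ŝ_k(x,z)}` expressed via
the quadratic form `Ŝ_k(x,z) = ½[x;z]ᵀQ_k[x;z]`. -/
noncomputable def primalKernel {n : ℕ} (M : Matrix (Fin n) (Fin n) ℝ)
    (Q : Matrix (Fin n ⊕ Fin n) (Fin n ⊕ Fin n) ℝ) (x y : Fin n → ℝ) : ℝ :=
  -(⨆ z : Fin n → ℝ,
      (1 / 2) * ((z - y) ⬝ᵥ M *ᵥ (z - y)) -
        (1 / 2) * (Sum.elim x z ⬝ᵥ Q *ᵥ Sum.elim x z))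

/-- The `⊛` operation on symmetric `2n×2n` matrices, defined blockwise with
`Π = Θ₁²² + Θ₂¹¹`. -/
noncomputable def starProd {n : ℕ} (T₁ T₂ : Matrix (Fin n ⊕ Fin n) (Fin n ⊕ Fin n) ℝ) :
    Matrix (Fin n ⊕ Fin n) (Fin n ⊕ Fin n) ℝ :=
  fromBlocks
    (T₁.toBlocks₁₁ - T₁.toBlocks₁₂ * (T₁.toBlocks₂₂ + T₂.toBlocks₁₁)⁻¹ * T₁.toBlocks₂₁)
    (-(T₁.toBlocks₁₂ * (T₁.toBlocks₂₂ + T₂.toBlocks₁₁)⁻¹ * T₂.toBlocks₁₂))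
    (-(T₂.toBlocks₂₁ * (T₁.toBlocks₂₂ + T₂.toBlocks₁₁)⁻¹ * T₁.toBlocks₂₁))
    (T₂.toBlocks₂₂ - T₂.toBlocks₂₁ * (T₁.toBlocks₂₂ + T₂.toBlocks₁₁)⁻¹ * T₂.toBlocks₁₂)

/-!
The primal kernel is the point-to-point value function of the control problem: `S_k(x, y)` is the
largest cost collected by a control sequence of length `k` that steers `x` to `y`. Once this is
known, the semigroup property only says that control sequences can be concatenated.

To identify the kernel, choose for given `x, y` the minimiser `z` of `Ŝ_k(x, ·) - ψ(·, y)`, where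
`∇_z Ŝ_k(x, z) = M(z - y)`. The supremum defining `Ŝ_k(x, z)` runs over a quadratic function of the
controls that is bounded above, so some control sequence attains it. Let `y'` be its end point. By
the envelope principle `∇_z Ŝ_k(x, z) = M(z - y')`, hence `M(y' - y) = 0`. The matrix `M` is
injective, because `Ŝ_k(x, ·)` is constant along `ker M` while `Q_k²² - M` is positive definite;
therefore `y' = y`.

The maximiser `ρ` in the semigroup identity solves a linear system with matrix
`Λ_{k₁}²² + Λ_{k₂}¹¹`, and eliminating it gives `⊛`.
-/

section QuadraticFunctions

variable {E F : Type*} [AddCommGroup E] [Module ℝ E] [AddCommGroup F] [Module ℝ F]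

theorem mem_range_of_forall_apply_eq_zero {K V : Type*} [Field K] [AddCommGroup V] [Module K V]
    [FiniteDimensional K V] {b : V →ₗ[K] Module.Dual K V} (hb : ∀ u v, b u v = b v u)
    {l : Module.Dual K V} (hl : ∀ v, b v = 0 → l v = 0) : l ∈ LinearMap.range b := by
  by_contra hmem
  obtain ⟨φ, hφl, hφb⟩ := Submodule.exists_le_ker_of_notMem hmem
  obtain ⟨v, rfl⟩ := (Module.evalEquiv K V).surjective φ
  have hbv : b v = 0 := LinearMap.ext fun u => (hb v u).trans (hφb ⟨u, rfl⟩)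
  exact hφl (hl v hbv)

/-- Functions of degree at most two on a real vector space: the sum of a quadratic form, a linear
form and a constant. -/
def IsQuadraticFun (f : E → ℝ) : Prop :=
  ∃ (q : QuadraticForm ℝ E) (l : Module.Dual ℝ E) (c : ℝ), ∀ v, f v = q v + l v + c

namespace IsQuadraticFun

theorem const (c : ℝ) : IsQuadraticFun fun _ : E => c :=
  ⟨0, 0, c, by simp⟩

theorem add {f g : E → ℝ} (hf : IsQuadraticFun f) (hg : IsQuadraticFun g) :
    IsQuadraticFun fun v => f v + g v := by
  obtain ⟨q, l, c, hf⟩ := hf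
  obtain ⟨q', l', c', hg⟩ := hg
  refine ⟨q + q', l + l', c + c', fun v => ?_⟩
  simp only [hf, hg, _root_.add_apply, LinearMap.add_apply]
  ring

theorem comp_affineMap {f : F → ℝ} (hf : IsQuadraticFun f) (g : E →ᵃ[ℝ] F) :
    IsQuadraticFun fun v => f (g v) := by
  obtain ⟨q, l, c, hf⟩ := hf
  refine ⟨q.comp g.linear, (l + q.polarBilin (g 0)) ∘ₗ g.linear, q (g 0) + l (g 0) + c,
    fun v => ?_⟩
  have hg : g v = g 0 + g.linear v := by
    rw [add_comm]; exact congrFun g.decomp v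
  simp only [hf]
  rw [hg, QuadraticMap.map_add q, l.map_add]
  simp only [QuadraticMap.comp_apply, LinearMap.comp_apply, LinearMap.add_apply,
    QuadraticMap.polarBilin_apply_apply]
  ring

theorem exists_forall_le [FiniteDimensional ℝ E] {f : E → ℝ} (hf : IsQuadraticFun f)
    (hbdd : BddAbove (Set.range f)) : ∃ v₀, ∀ v, f v ≤ f v₀ := by
  obtain ⟨q, l, c, hf⟩ := hf
  obtain ⟨C, hC⟩ := hbdd
  have along_line (v : E) (t : ℝ) : q v * (t * t) + l v * t + (c - C) ≤ 0 := by
    have := hC ⟨t • v, rfl⟩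
    simp only [hf, QuadraticMap.map_smul, map_smul, smul_eq_mul] at this
    linarith
  have form_nonpos (v : E) : q v ≤ 0 := by
    have h : discrim (q v) (l v) (c - C - 1) ≤ 0 :=
      discrim_le_zero_of_nonpos fun t => by linarith [along_line v t]
    have h0 := along_line v 0
    rw [discrim] at h
    nlinarith [sq_nonneg (l v)]
  have linear_eq_zero (v : E) (hv : q.polarBilin v = 0) : l v = 0 := by
    have hqv : q v = 0 := by
      have h : 2 * q v = q.polarBilin v v := by simp
      simpa [hv] using h
    have h : discrim (q v) (l v) (c - C) ≤ 0 := discrim_le_zero_of_nonpos (along_line v)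
    simpa [discrim, hqv, sq_nonpos_iff] using h
  obtain ⟨v₀, hv₀⟩ := mem_range_of_forall_apply_eq_zero (b := q.polarBilin) (l := -l)
    (fun u v => QuadraticMap.polar_comm q u v) (by simpa using linear_eq_zero)
  refine ⟨v₀, fun v => ?_⟩
  have expand : q v = q v₀ + q (v - v₀) - l (v - v₀) := by
    have h := QuadraticMap.map_add q v₀ (v - v₀)
    rw [add_sub_cancel, ← QuadraticMap.polarBilin_apply_apply, hv₀] at h
    simpa [sub_eq_add_neg] using h
  rw [hf, hf, expand, l.map_sub]
  linarith [form_nonpos (v - v₀)]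

end IsQuadraticFun

end QuadraticFunctions

section MatrixForms

variable {ι κ : Type*} [Fintype ι] [Fintype κ]

/-- The value `½ vᵀSv` of the quadratic function with Hessian `S`. -/
noncomputable def halfForm (S : Matrix ι ι ℝ) (v : ι → ℝ) : ℝ :=
  (1 / 2) * (v ⬝ᵥ S *ᵥ v)

theorem isQuadraticFun_halfForm (S : Matrix ι ι ℝ) : IsQuadraticFun (halfForm S) := by
  classical
  refine ⟨(1 / 2 : ℝ) • LinearMap.BilinMap.toQuadraticMap (toLinearMap₂' ℝ S), 0, 0, fun v => ?_⟩
  simp [halfForm, toLinearMap₂'_apply']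

theorem halfForm_sub_comm (S : Matrix ι ι ℝ) (u v : ι → ℝ) :
    halfForm S (u - v) = halfForm S (v - u) := by
  rw [halfForm, halfForm, ← neg_sub v u, mulVec_neg, neg_dotProduct_neg]

theorem halfForm_add {S : Matrix ι ι ℝ} (hS : S.IsSymm) (u v : ι → ℝ) :
    halfForm S (u + v) = halfForm S u + v ⬝ᵥ S *ᵥ u + halfForm S v := by
  have hcomm : u ⬝ᵥ S *ᵥ v = v ⬝ᵥ S *ᵥ u := by
    rw [dotProduct_mulVec, ← mulVec_transpose, hS.eq, dotProduct_comm]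
  simp only [halfForm, mulVec_add, add_dotProduct, dotProduct_add, hcomm]
  ring

theorem eq_of_halfForm_eq {S T : Matrix ι ι ℝ} (hS : S.IsSymm) (hT : T.IsSymm)
    (h : ∀ v, halfForm S v = halfForm T v) : S = T := by
  classical
  ext i j
  have hadd := h (Pi.single i 1 + Pi.single j 1)
  rw [halfForm_add hS, halfForm_add hT, h, h] at hadd
  simpa [hS.apply i j, hT.apply i j] using hadd

theorem sumElim_dotProduct_mulVec_sumElim (S : Matrix (ι ⊕ κ) (ι ⊕ κ) ℝ)
    (u x : ι → ℝ) (v y : κ → ℝ) :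
    Sum.elim u v ⬝ᵥ S *ᵥ Sum.elim x y =
      u ⬝ᵥ (S.toBlocks₁₁ *ᵥ x + S.toBlocks₁₂ *ᵥ y) +
        v ⬝ᵥ (S.toBlocks₂₁ *ᵥ x + S.toBlocks₂₂ *ᵥ y) := by
  conv_lhs => rw [← fromBlocks_toBlocks S]
  simp only [fromBlocks_mulVec, Sum.elim_comp_inl, Sum.elim_comp_inr, sumElim_dotProduct_sumElim]

theorem halfForm_sumElim_add_right {S : Matrix (ι ⊕ κ) (ι ⊕ κ) ℝ} (hS : S.IsSymm)
    (x : ι → ℝ) (y v : κ → ℝ) :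
    halfForm S (Sum.elim x (y + v)) = halfForm S (Sum.elim x y) +
      v ⬝ᵥ (S.toBlocks₂₁ *ᵥ x + S.toBlocks₂₂ *ᵥ y) + halfForm S.toBlocks₂₂ v := by
  have hsplit : Sum.elim x (y + v) = Sum.elim x y + Sum.elim (0 : ι → ℝ) v := by
    simp [← Sum.elim_add_add]
  rw [hsplit, halfForm_add hS]
  simp [sumElim_dotProduct_mulVec_sumElim, halfForm]

theorem halfForm_sumElim_add_left {S : Matrix (ι ⊕ κ) (ι ⊕ κ) ℝ} (hS : S.IsSymm)
    (x u : ι → ℝ) (y : κ → ℝ) :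
    halfForm S (Sum.elim (x + u) y) = halfForm S (Sum.elim x y) +
      u ⬝ᵥ (S.toBlocks₁₁ *ᵥ x + S.toBlocks₁₂ *ᵥ y) + halfForm S.toBlocks₁₁ u := by
  have hsplit : Sum.elim (x + u) y = Sum.elim x y + Sum.elim u (0 : κ → ℝ) := by
    simp [← Sum.elim_add_add]
  rw [hsplit, halfForm_add hS]
  simp [sumElim_dotProduct_mulVec_sumElim, halfForm]

theorem eq_zero_of_forall_dotProduct_add_halfForm_nonneg {g : ι → ℝ} {S : Matrix ι ι ℝ}
    (h : ∀ v, 0 ≤ v ⬝ᵥ g + halfForm S v) : g = 0 := by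
  have hdisc : discrim (halfForm S g) (g ⬝ᵥ g) 0 ≤ 0 := discrim_le_zero fun t => by
    have := h (t • g)
    simp only [halfForm, mulVec_smul, smul_dotProduct, dotProduct_smul, smul_eq_mul] at this ⊢
    linarith
  simpa [discrim, sq_nonpos_iff, dotProduct_self_eq_zero] using hdisc

end MatrixForms

section Control

variable {n m : ℕ} (A : Matrix (Fin n) (Fin n) ℝ) (B : Matrix (Fin n) (Fin m) ℝ)
  (Φ : Matrix (Fin n) (Fin n) ℝ) (γ : ℝ) (x : Fin n → ℝ)

/-- The state reached from `x` under the dynamics `x ↦ Ax + Bw` by a control sequence of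
length `k`. The recursion peels off the last control. -/
def controlledState : {k : ℕ} → (Fin k → Fin m → ℝ) → Fin n → ℝ
  | 0, _ => x
  | _ + 1, w => A *ᵥ controlledState (Fin.init w) + B *ᵥ w (Fin.last _)

/-- The cost `∑ ½ xⱼᵀΦxⱼ - (γ²/2)|wⱼ|²` accumulated from `x` along a control sequence of
length `k`. -/
noncomputable def controlCost : {k : ℕ} → (Fin k → Fin m → ℝ) → ℝ
  | 0, _ => 0
  | _ + 1, w => controlCost (Fin.init w) +
      (halfForm Φ (controlledState A B x (Fin.init w)) -
        γ ^ 2 / 2 * (w (Fin.last _) ⬝ᵥ w (Fin.last _)))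

theorem controlledState_append {k l : ℕ} (u : Fin k → Fin m → ℝ) (v : Fin l → Fin m → ℝ) :
    controlledState A B x (Fin.append u v) =
      controlledState A B (controlledState A B x u) v := by
  induction l with
  | zero => simp [controlledState, Fin.append_right_nil]
  | succ l ih =>
    rw [← Fin.snoc_init_self v, Fin.append_snoc]
    simp only [controlledState, Fin.init_snoc, Fin.snoc_last, ih]

theorem controlCost_append {k l : ℕ} (u : Fin k → Fin m → ℝ) (v : Fin l → Fin m → ℝ) :
    controlCost A B Φ γ x (Fin.append u v) =
      controlCost A B Φ γ x u + controlCost A B Φ γ (controlledState A B x u) v := by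
  induction l with
  | zero => simp [controlCost, Fin.append_right_nil]
  | succ l ih =>
    rw [← Fin.snoc_init_self v, Fin.append_snoc]
    simp only [controlCost, Fin.init_snoc, Fin.snoc_last, ih, controlledState_append]
    ring

theorem exists_affineMap_eq_controlledState (k : ℕ) :
    ∃ g : (Fin k → Fin m → ℝ) →ᵃ[ℝ] (Fin n → ℝ), ∀ w, g w = controlledState A B x w := by
  induction k with
  | zero => exact ⟨AffineMap.const ℝ _ x, fun _ => rfl⟩
  | succ k ih =>
    obtain ⟨g, hg⟩ := ih
    refine ⟨A.mulVecLin.toAffineMap.comp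
        (g.comp (LinearMap.funLeft ℝ (Fin m → ℝ) Fin.castSucc).toAffineMap) +
      (B.mulVecLin ∘ₗ LinearMap.proj (Fin.last k)).toAffineMap, fun w => ?_⟩
    simp only [controlledState, ← hg]
    rfl

theorem isQuadraticFun_controlCost (k : ℕ) :
    IsQuadraticFun fun w : Fin k → Fin m → ℝ => controlCost A B Φ γ x w := by
  induction k with
  | zero => exact .const 0
  | succ k ih =>
    obtain ⟨g, hg⟩ := exists_affineMap_eq_controlledState A B x k
    let initMap := (LinearMap.funLeft ℝ (Fin m → ℝ) (Fin.castSucc (n := k))).toAffineMap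
    let lastMap :=
      (LinearMap.proj (R := ℝ) (φ := fun _ : Fin (k + 1) => Fin m → ℝ) (Fin.last k)).toAffineMap
    convert (ih.comp_affineMap initMap).add
      (((isQuadraticFun_halfForm Φ).comp_affineMap (g.comp initMap)).add
        ((isQuadraticFun_halfForm (-γ ^ 2 • (1 : Matrix (Fin m) (Fin m) ℝ))).comp_affineMap
          lastMap)) using 2 with w
    have hinit : initMap w = Fin.init w := rfl
    have hlast : lastMap w = w (Fin.last k) := rfl
    simp only [controlCost, AffineMap.comp_apply, hinit, hlast, hg, halfForm, smul_mulVec,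
      one_mulVec, dotProduct_smul, smul_eq_mul]
    ring

/-- The costs of all control sequences of length `k` that steer `x` to `y`. -/
def steeringCosts (k : ℕ) (x y : Fin n → ℝ) : Set ℝ :=
  controlCost A B Φ γ x '' {w : Fin k → Fin m → ℝ | controlledState A B x w = y}

theorem mem_steeringCosts_add {k l : ℕ} {x y : Fin n → ℝ} {c : ℝ} :
    c ∈ steeringCosts A B Φ γ (k + l) x y ↔
      ∃ ρ, ∃ c₁ ∈ steeringCosts A B Φ γ k x ρ, ∃ c₂ ∈ steeringCosts A B Φ γ l ρ y,
        c₁ + c₂ = c := by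
  constructor
  · rintro ⟨w, hw, rfl⟩
    obtain ⟨⟨u, v⟩, rfl⟩ := (Fin.appendEquiv k l).surjective w
    exact ⟨_, _, ⟨u, rfl, rfl⟩, _, ⟨v, (controlledState_append A B x u v).symm.trans hw, rfl⟩,
      (controlCost_append A B Φ γ x u v).symm⟩
  · rintro ⟨_, _, ⟨u, rfl, rfl⟩, _, ⟨v, hv, rfl⟩, rfl⟩
    exact ⟨Fin.append u v, (controlledState_append A B x u v).trans hv,
      controlCost_append A B Φ γ x u v⟩

theorem isGreatest_range_add_of_isGreatest_steeringCosts {k l : ℕ}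
    {V₁ V₂ : (Fin n → ℝ) → ℝ} {x y : Fin n → ℝ} {c : ℝ}
    (h₁ : ∀ ρ, IsGreatest (steeringCosts A B Φ γ k x ρ) (V₁ ρ))
    (h₂ : ∀ ρ, IsGreatest (steeringCosts A B Φ γ l ρ y) (V₂ ρ))
    (hc : IsGreatest (steeringCosts A B Φ γ (k + l) x y) c) :
    IsGreatest (Set.range fun ρ => V₁ ρ + V₂ ρ) c := by
  have hle (ρ : Fin n → ℝ) : V₁ ρ + V₂ ρ ≤ c :=
    hc.2 ((mem_steeringCosts_add A B Φ γ).2 ⟨ρ, _, (h₁ ρ).1, _, (h₂ ρ).1, rfl⟩)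
  obtain ⟨ρ, c₁, hc₁, c₂, hc₂, rfl⟩ := (mem_steeringCosts_add A B Φ γ).1 hc.1
  exact ⟨⟨ρ, (hle ρ).antisymm (add_le_add ((h₁ ρ).2 hc₁) ((h₂ ρ).2 hc₂))⟩,
    Set.forall_mem_range.2 hle⟩

end Control

section DynamicProgramming

variable {n m : ℕ} {A : Matrix (Fin n) (Fin n) ℝ} {B : Matrix (Fin n) (Fin m) ℝ}
  {Φ : Matrix (Fin n) (Fin n) ℝ} {γ : ℝ}

theorem ereal_coe_add_iSup {ι : Sort*} (c : ℝ) (f : ι → EReal) :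
    (c : EReal) + ⨆ i, f i = ⨆ i, ((c : EReal) + f i) := by
  have gc : GaloisConnection (fun a : EReal => (c : EReal) + a) (fun a => a - c) := fun a b => by
    rw [EReal.le_sub_iff_add_le (by simp) (by simp), add_comm]
  exact gc.l_iSup

theorem DP_iterate_eq_iSup (k : ℕ) (φ : (Fin n → ℝ) → EReal) (x : Fin n → ℝ) :
    (DP A B Φ γ)^[k] φ x =
      ⨆ w : Fin k → Fin m → ℝ,
        (controlCost A B Φ γ x w : EReal) + φ (controlledState A B x w) := by
  induction k generalizing φ with
  | zero => simp [controlCost, controlledState]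
  | succ k ih =>
    rw [Function.iterate_succ_apply, ih, ← (Fin.snocEquiv fun _ => Fin m → ℝ).iSup_comp,
      iSup_prod, iSup_comm]
    simp only [DP, ereal_coe_add_iSup]
    refine iSup_congr fun u => iSup_congr fun a => ?_
    have hinit : Fin.init (Fin.snocEquiv (fun _ => Fin m → ℝ) (a, u)) = u := Fin.init_snoc _ _
    have hlast : Fin.snocEquiv (fun _ => Fin m → ℝ) (a, u) (Fin.last k) = a := by simp
    simp only [controlCost, controlledState, hinit, hlast, EReal.coe_add, add_assoc, halfForm]

theorem isGreatest_of_DP_iterate_eq_coe {k : ℕ} {φ : (Fin n → ℝ) → ℝ} (hφ : IsQuadraticFun φ)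
    {x : Fin n → ℝ} {s : ℝ} (h : (DP A B Φ γ)^[k] (fun y => (φ y : EReal)) x = s) :
    IsGreatest (Set.range fun w : Fin k → Fin m → ℝ =>
      controlCost A B Φ γ x w + φ (controlledState A B x w)) s := by
  simp only [DP_iterate_eq_iSup, ← EReal.coe_add] at h
  have hle (w : Fin k → Fin m → ℝ) :
      controlCost A B Φ γ x w + φ (controlledState A B x w) ≤ s :=
    EReal.coe_le_coe_iff.1 (iSup_le_iff.1 h.le w)
  have hbdd : s ∈ upperBounds (Set.range fun w : Fin k → Fin m → ℝ =>
      controlCost A B Φ γ x w + φ (controlledState A B x w)) := Set.forall_mem_range.2 hle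
  obtain ⟨g, hg⟩ := exists_affineMap_eq_controlledState A B x k
  have hquad := (isQuadraticFun_controlCost A B Φ γ x k).add (hφ.comp_affineMap g)
  simp only [hg] at hquad
  obtain ⟨w₀, hw₀⟩ := hquad.exists_forall_le ⟨s, hbdd⟩
  have hge : s ≤ controlCost A B Φ γ x w₀ + φ (controlledState A B x w₀) :=
    EReal.coe_le_coe_iff.1 (h.symm.trans_le (iSup_le fun w => EReal.coe_le_coe_iff.2 (hw₀ w)))
  exact ⟨⟨w₀, (hle w₀).antisymm hge⟩, hbdd⟩

end DynamicProgramming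

section PrimalKernel

variable {n : ℕ} {M : Matrix (Fin n) (Fin n) ℝ} {Q : Matrix (Fin n ⊕ Fin n) (Fin n ⊕ Fin n) ℝ}

theorem halfForm_sumElim_add_sub_halfForm_add_sub (hM : M.IsSymm) (hQ : Q.IsSymm)
    (x y z v : Fin n → ℝ) :
    halfForm Q (Sum.elim x (z + v)) - halfForm M (z + v - y) =
      halfForm Q (Sum.elim x z) - halfForm M (z - y) +
        v ⬝ᵥ (Q.toBlocks₂₁ *ᵥ x + Q.toBlocks₂₂ *ᵥ z - M *ᵥ (z - y)) +
        halfForm (Q.toBlocks₂₂ - M) v := by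
  rw [halfForm_sumElim_add_right hQ, add_sub_right_comm z v y, halfForm_add hM]
  simp only [halfForm, sub_mulVec, dotProduct_sub]
  ring

theorem exists_mulVec_add_mulVec_eq (hQM : IsUnit (Q.toBlocks₂₂ - M)) (x y : Fin n → ℝ) :
    ∃ z, Q.toBlocks₂₁ *ᵥ x + Q.toBlocks₂₂ *ᵥ z = M *ᵥ (z - y) := by
  obtain ⟨z, hz⟩ := mulVec_surjective_iff_isUnit.2 hQM (-(Q.toBlocks₂₁ *ᵥ x + M *ᵥ y))
  refine ⟨z, ?_⟩
  rw [sub_mulVec, sub_eq_iff_eq_add] at hz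
  rw [hz, mulVec_sub]
  abel

theorem primalKernel_eq_of_critical (hM : M.IsSymm) (hQ : Q.IsSymm)
    (hQM : (Q.toBlocks₂₂ - M).PosSemidef) {x y z : Fin n → ℝ}
    (hz : Q.toBlocks₂₁ *ᵥ x + Q.toBlocks₂₂ *ᵥ z = M *ᵥ (z - y)) :
    primalKernel M Q x y = halfForm Q (Sum.elim x z) - halfForm M (z - y) := by
  have hmin (z' : Fin n → ℝ) : halfForm M (z' - y) - halfForm Q (Sum.elim x z') ≤
      halfForm M (z - y) - halfForm Q (Sum.elim x z) := by
    have hexp := halfForm_sumElim_add_sub_halfForm_add_sub hM hQ x y z (z' - z)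
    rw [add_sub_cancel, hz, sub_self, dotProduct_zero] at hexp
    have hnonneg : 0 ≤ halfForm (Q.toBlocks₂₂ - M) (z' - z) :=
      mul_nonneg (by norm_num) (by simpa using hQM.dotProduct_mulVec_nonneg (z' - z))
    linarith
  have hsup : ⨆ z', (halfForm M (z' - y) - halfForm Q (Sum.elim x z')) =
      halfForm M (z - y) - halfForm Q (Sum.elim x z) :=
    IsLUB.ciSup_eq (IsGreatest.isLUB ⟨⟨z, rfl⟩, Set.forall_mem_range.2 hmin⟩)
  rw [← neg_sub, ← hsup]
  rfl

variable {W : Type*} {cost : W → ℝ} {endpoint : W → Fin n → ℝ} {x : Fin n → ℝ}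

theorem eq_zero_of_mulVec_eq_zero_of_isGreatest (hM : M.IsSymm) (hQ : Q.IsSymm)
    (hQM : (Q.toBlocks₂₂ - M).PosDef)
    (hS : ∀ z, IsGreatest (Set.range fun w => cost w + halfForm M (endpoint w - z))
      (halfForm Q (Sum.elim x z)))
    {v : Fin n → ℝ} (hv : M *ᵥ v = 0) : v = 0 := by
  have hconst (u : Fin n → ℝ) (hu : M *ᵥ u = 0) :
      halfForm Q (Sum.elim x u) = halfForm Q (Sum.elim x 0) := by
    have hinv (w : W) : halfForm M (endpoint w - u) = halfForm M (endpoint w - 0) := by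
      rw [sub_zero, ← neg_add_eq_sub, halfForm_add hM]
      simp [halfForm, mulVec_neg, hu]
    have hSu := hS u
    simp only [hinv] at hSu
    exact hSu.unique (hS 0)
  have hpos := hconst v hv
  have hneg := hconst (-v) (by rw [mulVec_neg, hv, neg_zero])
  rw [← zero_add v, halfForm_sumElim_add_right hQ] at hpos
  rw [← zero_add (-v), halfForm_sumElim_add_right hQ] at hneg
  have hform : v ⬝ᵥ (Q.toBlocks₂₂ - M) *ᵥ v = 0 := by
    simp only [halfForm, neg_dotProduct, mulVec_neg, dotProduct_neg] at hpos hneg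
    simp only [sub_mulVec, hv, sub_zero]
    linarith
  by_contra hne
  exact (hQM.dotProduct_mulVec_pos hne).ne' (by simpa using hform)

theorem isGreatest_primalKernel (hM : M.IsSymm) (hQ : Q.IsSymm)
    (hQM : (Q.toBlocks₂₂ - M).PosDef)
    (hS : ∀ z, IsGreatest (Set.range fun w => cost w + halfForm M (endpoint w - z))
      (halfForm Q (Sum.elim x z)))
    (y : Fin n → ℝ) :
    IsGreatest (cost '' {w | endpoint w = y}) (primalKernel M Q x y) := by
  obtain ⟨z, hz⟩ := exists_mulVec_add_mulVec_eq hQM.isUnit x y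
  rw [primalKernel_eq_of_critical hM hQ hQM.posSemidef hz, halfForm_sub_comm]
  obtain ⟨w, hw⟩ := (hS z).1
  simp only at hw
  have envelope : Q.toBlocks₂₁ *ᵥ x + Q.toBlocks₂₂ *ᵥ z - M *ᵥ (z - endpoint w) = 0 := by
    refine eq_zero_of_forall_dotProduct_add_halfForm_nonneg (S := Q.toBlocks₂₂ - M) fun v => ?_
    have hexp := halfForm_sumElim_add_sub_halfForm_add_sub hM hQ x (endpoint w) z v
    have hle := (hS (z + v)).2 ⟨w, rfl⟩
    simp only [halfForm_sub_comm M (endpoint w)] at hw hle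
    linarith
  have hend : endpoint w = y := by
    rw [hz, ← mulVec_sub, sub_sub_sub_cancel_left] at envelope
    exact sub_eq_zero.1 (eq_zero_of_mulVec_eq_zero_of_isGreatest hM hQ hQM hS envelope)
  refine ⟨⟨w, hend, by rw [← hw, hend]; ring⟩, ?_⟩
  rintro _ ⟨w', rfl, rfl⟩
  exact le_sub_iff_add_le.2 ((hS z).2 ⟨w', rfl⟩)

theorem isGreatest_steeringCosts_primalKernel {m k : ℕ} {A : Matrix (Fin n) (Fin n) ℝ}
    {B : Matrix (Fin n) (Fin m) ℝ} {Φ : Matrix (Fin n) (Fin n) ℝ} {γ : ℝ} (hM : M.IsSymm)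
    (hQ : Q.IsSymm) (hQM : (Q.toBlocks₂₂ - M).PosDef)
    (hS : ∀ x z : Fin n → ℝ, (DP A B Φ γ)^[k] (fun x' => (halfForm M (x' - z) : EReal)) x =
      (halfForm Q (Sum.elim x z) : EReal))
    (x y : Fin n → ℝ) :
    IsGreatest (steeringCosts A B Φ γ k x y) (primalKernel M Q x y) := by
  have hquad (z : Fin n → ℝ) : IsQuadraticFun fun x' => halfForm M (x' - z) :=
    (isQuadraticFun_halfForm M).comp_affineMap
      (AffineMap.id ℝ (Fin n → ℝ) - AffineMap.const ℝ (Fin n → ℝ) z)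
  exact isGreatest_primalKernel hM hQ hQM
    (fun z => isGreatest_of_DP_iterate_eq_coe (hquad z) (hS x z)) y

end PrimalKernel

section StarProduct

variable {n : ℕ} {T₁ T₂ : Matrix (Fin n ⊕ Fin n) (Fin n ⊕ Fin n) ℝ}

theorem isSymm_starProd (h₁ : T₁.IsSymm) (h₂ : T₂.IsSymm) : (starProd T₁ T₂).IsSymm := by
  have h₁' := h₁
  have h₂' := h₂
  rw [← fromBlocks_toBlocks T₁, isSymm_fromBlocks_iff] at h₁'
  rw [← fromBlocks_toBlocks T₂, isSymm_fromBlocks_iff] at h₂'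
  obtain ⟨h₁11, h₁12, h₁21, h₁22⟩ := h₁'
  obtain ⟨h₂11, h₂12, h₂21, h₂22⟩ := h₂'
  rw [starProd, isSymm_fromBlocks_iff]
  simp only [Matrix.IsSymm, transpose_sub, transpose_neg, transpose_mul, transpose_nonsing_inv,
    transpose_add, h₁11.eq, h₁12, h₁21, h₁22.eq, h₂11.eq, h₂12, h₂21, h₂22.eq, Matrix.mul_assoc,
    and_self]

theorem halfForm_add_halfForm_eq_starProd_of_critical
    (hP : IsUnit (T₁.toBlocks₂₂ + T₂.toBlocks₁₁)) {x y ρ : Fin n → ℝ}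
    (hρ : (T₁.toBlocks₂₁ *ᵥ x + T₁.toBlocks₂₂ *ᵥ ρ) +
      (T₂.toBlocks₁₁ *ᵥ ρ + T₂.toBlocks₁₂ *ᵥ y) = 0) :
    halfForm T₁ (Sum.elim x ρ) + halfForm T₂ (Sum.elim ρ y) =
      halfForm (starProd T₁ T₂) (Sum.elim x y) := by
  set P := T₁.toBlocks₂₂ + T₂.toBlocks₁₁ with hPdef
  have hsolve : ρ = -(P⁻¹ *ᵥ T₁.toBlocks₂₁ *ᵥ x + P⁻¹ *ᵥ T₂.toBlocks₁₂ *ᵥ y) := by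
    have hPρ : P *ᵥ ρ = -(T₁.toBlocks₂₁ *ᵥ x + T₂.toBlocks₁₂ *ᵥ y) := by
      rw [eq_neg_iff_add_eq_zero, ← hρ, hPdef, add_mulVec]
      abel
    rw [← mulVec_add, ← mulVec_neg, ← hPρ, mulVec_mulVec,
      nonsing_inv_mul _ ((isUnit_iff_isUnit_det _).1 hP), one_mulVec]
  have hstar : starProd T₁ T₂ *ᵥ Sum.elim x y =
      Sum.elim (T₁.toBlocks₁₁ *ᵥ x + T₁.toBlocks₁₂ *ᵥ ρ)
        (T₂.toBlocks₂₁ *ᵥ ρ + T₂.toBlocks₂₂ *ᵥ y) := by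
    rw [starProd, ← hPdef, fromBlocks_mulVec, hsolve]
    simp only [Sum.elim_comp_inl, Sum.elim_comp_inr, sub_mulVec, neg_mulVec, mulVec_neg,
      mulVec_add, mulVec_mulVec, Matrix.mul_assoc]
    congr 1 <;> abel
  have hρρ := congrArg (ρ ⬝ᵥ ·) hρ
  simp only [halfForm, hstar, sumElim_dotProduct_mulVec_sumElim, sumElim_dotProduct_sumElim,
    dotProduct_add, dotProduct_zero] at hρρ ⊢
  linarith

theorem eq_halfForm_starProd_of_isGreatest (h₁ : T₁.IsSymm) (h₂ : T₂.IsSymm)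
    (hP : IsUnit (T₁.toBlocks₂₂ + T₂.toBlocks₁₁)) {x y : Fin n → ℝ} {c : ℝ}
    (hc : IsGreatest
      (Set.range fun ρ => halfForm T₁ (Sum.elim x ρ) + halfForm T₂ (Sum.elim ρ y)) c) :
    c = halfForm (starProd T₁ T₂) (Sum.elim x y) := by
  obtain ⟨⟨ρ, rfl⟩, hmax⟩ := hc
  refine halfForm_add_halfForm_eq_starProd_of_critical hP (neg_eq_zero.1 ?_)
  refine eq_zero_of_forall_dotProduct_add_halfForm_nonneg
    (S := -(T₁.toBlocks₂₂ + T₂.toBlocks₁₁)) fun v => ?_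
  have hle := hmax ⟨ρ + v, rfl⟩
  simp only [halfForm_sumElim_add_right h₁, halfForm_sumElim_add_left h₂] at hle
  simp only [halfForm, neg_mulVec, add_mulVec, dotProduct_neg, dotProduct_add] at hle ⊢
  linarith

end StarProduct

theorem primal_kernel_semigroup_general {n m : ℕ}
    {A : Matrix (Fin n) (Fin n) ℝ} {B : Matrix (Fin n) (Fin m) ℝ}
    {Φ : Matrix (Fin n) (Fin n) ℝ} {γ : ℝ}
    {M : Matrix (Fin n) (Fin n) ℝ} (hM : M.IsSymm) {k₁ k₂ : ℕ}
    {Q₁ Q₂ Q₃ : Matrix (Fin n ⊕ Fin n) (Fin n ⊕ Fin n) ℝ}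
    (hQ₁symm : Q₁.IsSymm) (hQ₂symm : Q₂.IsSymm) (hQ₃symm : Q₃.IsSymm)
    (hQ₁ : ∀ x z : Fin n → ℝ, (DP A B Φ γ)^[k₁] (fun x' => (halfForm M (x' - z) : EReal)) x =
      (halfForm Q₁ (Sum.elim x z) : EReal))
    (hQ₂ : ∀ x z : Fin n → ℝ, (DP A B Φ γ)^[k₂] (fun x' => (halfForm M (x' - z) : EReal)) x =
      (halfForm Q₂ (Sum.elim x z) : EReal))
    (hQ₃ : ∀ x z : Fin n → ℝ,
      (DP A B Φ γ)^[k₁ + k₂] (fun x' => (halfForm M (x' - z) : EReal)) x =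
        (halfForm Q₃ (Sum.elim x z) : EReal))
    (hQ₁22 : (Q₁.toBlocks₂₂ - M).PosDef) (hQ₂22 : (Q₂.toBlocks₂₂ - M).PosDef)
    (hQ₃22 : (Q₃.toBlocks₂₂ - M).PosDef)
    {Λ₁ Λ₂ Λ₃ : Matrix (Fin n ⊕ Fin n) (Fin n ⊕ Fin n) ℝ}
    (hΛ₁symm : Λ₁.IsSymm) (hΛ₂symm : Λ₂.IsSymm) (hΛ₃symm : Λ₃.IsSymm)
    (hΛ₁ : ∀ x y : Fin n → ℝ, primalKernel M Q₁ x y = halfForm Λ₁ (Sum.elim x y))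
    (hΛ₂ : ∀ x y : Fin n → ℝ, primalKernel M Q₂ x y = halfForm Λ₂ (Sum.elim x y))
    (hΛ₃ : ∀ x y : Fin n → ℝ, primalKernel M Q₃ x y = halfForm Λ₃ (Sum.elim x y))
    (hΛ : IsUnit (Λ₁.toBlocks₂₂ + Λ₂.toBlocks₁₁)) :
    (∀ x y : Fin n → ℝ, primalKernel M Q₃ x y =
        ⨆ ρ : Fin n → ℝ, primalKernel M Q₁ x ρ + primalKernel M Q₂ ρ y) ∧
      Λ₃ = starProd Λ₁ Λ₂ := by
  have hmax (x y : Fin n → ℝ) :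
      IsGreatest (Set.range fun ρ => primalKernel M Q₁ x ρ + primalKernel M Q₂ ρ y)
        (primalKernel M Q₃ x y) :=
    isGreatest_range_add_of_isGreatest_steeringCosts A B Φ γ
      (isGreatest_steeringCosts_primalKernel hM hQ₁symm hQ₁22 hQ₁ x)
      (isGreatest_steeringCosts_primalKernel hM hQ₂symm hQ₂22 hQ₂ · y)
      (isGreatest_steeringCosts_primalKernel hM hQ₃symm hQ₃22 hQ₃ x y)
  refine ⟨fun x y => (hmax x y).isLUB.ciSup_eq.symm, ?_⟩
  refine eq_of_halfForm_eq hΛ₃symm (isSymm_starProd hΛ₁symm hΛ₂symm) fun v => ?_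
  rw [← Sum.elim_comp_inl_inr v, ← hΛ₃]
  refine eq_halfForm_starProd_of_isGreatest hΛ₁symm hΛ₂symm hΛ ?_
  simpa only [hΛ₁, hΛ₂] using hmax (v ∘ Sum.inl) (v ∘ Sum.inr)

/-- Semigroup property of the primal kernels:
`S_{k₁+k₂}(x,y) = sup_ρ {S_{k₁}(x,ρ) + S_{k₂}(ρ,y)}` and `Λ_{k₁+k₂} = Λ_{k₁} ⊛ Λ_{k₂}`. -/
theorem primal_kernel_semigroup {n m : ℕ}
    (A : Matrix (Fin n) (Fin n) ℝ) (B : Matrix (Fin n) (Fin m) ℝ)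
    (Φ : Matrix (Fin n) (Fin n) ℝ) (hΦsymm : Φ.IsSymm) (hΦ : Φ.PosDef)
    (γ : ℝ) (hγ : 0 < γ)
    (M : Matrix (Fin n) (Fin n) ℝ) (hMsymm : M.IsSymm)
    (hM1 : ∀ k : ℕ,
      (γ ^ 2 • (1 : Matrix (Fin m) (Fin m) ℝ) - Bᵀ * ((Ric A B Φ γ)^[k] M) * B).PosDef)
    (hM2 : (Ric A B Φ γ M - M).PosDef)
    (hM3 : (M * B * (γ ^ 2 • (1 : Matrix (Fin m) (Fin m) ℝ) - Bᵀ * M * B)⁻¹ * Bᵀ * M).PosDef)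
    (k₁ k₂ : ℕ) (hk₁ : 1 ≤ k₁) (hk₂ : 1 ≤ k₂)
    (Q₁ Q₂ Q₃ : Matrix (Fin n ⊕ Fin n) (Fin n ⊕ Fin n) ℝ)
    (hQ₁symm : Q₁.IsSymm) (hQ₂symm : Q₂.IsSymm) (hQ₃symm : Q₃.IsSymm)
    -- `Ŝ_k` is finite and quadratic with Hessian `Q_k` for `k ∈ {k₁, k₂, k₁+k₂}`:
    (hQ₁ : ∀ x z : Fin n → ℝ,
      (DP A B Φ γ)^[k₁]
          (fun x' => (((1 / 2) * ((x' - z) ⬝ᵥ M *ᵥ (x' - z)) : ℝ) : EReal)) x =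
        (((1 / 2) * (Sum.elim x z ⬝ᵥ Q₁ *ᵥ Sum.elim x z) : ℝ) : EReal))
    (hQ₂ : ∀ x z : Fin n → ℝ,
      (DP A B Φ γ)^[k₂]
          (fun x' => (((1 / 2) * ((x' - z) ⬝ᵥ M *ᵥ (x' - z)) : ℝ) : EReal)) x =
        (((1 / 2) * (Sum.elim x z ⬝ᵥ Q₂ *ᵥ Sum.elim x z) : ℝ) : EReal))
    (hQ₃ : ∀ x z : Fin n → ℝ,
      (DP A B Φ γ)^[k₁ + k₂]
          (fun x' => (((1 / 2) * ((x' - z) ⬝ᵥ M *ᵥ (x' - z)) : ℝ) : EReal)) x =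
        (((1 / 2) * (Sum.elim x z ⬝ᵥ Q₃ *ᵥ Sum.elim x z) : ℝ) : EReal))
    (hQ₁22 : (Q₁.toBlocks₂₂ - M).PosDef) (hQ₂22 : (Q₂.toBlocks₂₂ - M).PosDef)
    (hQ₃22 : (Q₃.toBlocks₂₂ - M).PosDef)
    (Λ₁ Λ₂ Λ₃ : Matrix (Fin n ⊕ Fin n) (Fin n ⊕ Fin n) ℝ)
    (hΛ₁symm : Λ₁.IsSymm) (hΛ₂symm : Λ₂.IsSymm) (hΛ₃symm : Λ₃.IsSymm)
    -- the primal kernels are quadratic with Hessians `Λ_k`: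
    (hΛ₁ : ∀ x y : Fin n → ℝ,
      primalKernel M Q₁ x y = (1 / 2) * (Sum.elim x y ⬝ᵥ Λ₁ *ᵥ Sum.elim x y))
    (hΛ₂ : ∀ x y : Fin n → ℝ,
      primalKernel M Q₂ x y = (1 / 2) * (Sum.elim x y ⬝ᵥ Λ₂ *ᵥ Sum.elim x y))
    (hΛ₃ : ∀ x y : Fin n → ℝ,
      primalKernel M Q₃ x y = (1 / 2) * (Sum.elim x y ⬝ᵥ Λ₃ *ᵥ Sum.elim x y))
    (hneg : (-(Λ₁.toBlocks₂₂ + Λ₂.toBlocks₁₁)).PosDef) :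
    (∀ x y : Fin n → ℝ,
        primalKernel M Q₃ x y =
          ⨆ ρ : Fin n → ℝ, primalKernel M Q₁ x ρ + primalKernel M Q₂ ρ y) ∧
      Λ₃ = starProd Λ₁ Λ₂ := by
  have hunit : IsUnit (Λ₁.toBlocks₂₂ + Λ₂.toBlocks₁₁) := (IsUnit.neg_iff _).1 hneg.isUnit
  exact primal_kernel_semigroup_general hMsymm hQ₁symm hQ₂symm hQ₃symm hQ₁ hQ₂ hQ₃ hQ₁22 hQ₂22
    hQ₃22 hΛ₁symm hΛ₂symm hΛ₃symm hΛ₁ hΛ₂ hΛ₃ hunit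
end

section
/- Max-plus convolution of quadratic kernels (computational core of the semigroup propagation rule): Let Θ₁ and Θ₂ be symmetric 2n×2n real matrices with n×n blocks Θ_i¹¹, Θ_i¹², Θ_i²¹ = (Θ_i¹²)ᵀ, Θ_i²², and suppose Π := Θ₁²² + Θ₂¹¹ is negative definite. Then for all x, y ∈ ℝⁿ, sup_{ρ∈ℝⁿ} { (1/2)[x;ρ]ᵀΘ₁[x;ρ] + (1/2)[ρ;y]ᵀΘ₂[ρ;y] } is attained and equals (1/2)[x;y]ᵀ(Θ₁ ⊛ Θ₂)[x;y]. -/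
open Matrix

/-!
As a function of `ρ`, twice the objective is `c + ρᵀΠρ + 2bᵀρ`, where
`c = xᵀΘ₁¹¹x + yᵀΘ₂²²y` and `b = Θ₁²¹x + Θ₂¹²y`. Completing the square gives
`c - bᵀΠ⁻¹b + (ρ + Π⁻¹b)ᵀΠ(ρ + Π⁻¹b)`, whose maximum `c - bᵀΠ⁻¹b`, attained at `ρ = -Π⁻¹b`,
is the quadratic form of `Θ₁ ⊛ Θ₂` at `[x;y]`.
-/

section CompletingTheSquare

variable {n : Type*} [Fintype n]

theorem dotProduct_mulVec_self_add_two_mul_dotProduct {R : Type*} [CommRing R] [DecidableEq n]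
    {A : Matrix n n R} (hA : A.IsSymm) (hA_unit : IsUnit A) (b v : n → R) :
    v ⬝ᵥ A *ᵥ v + 2 * (b ⬝ᵥ v) =
      (v + A⁻¹ *ᵥ b) ⬝ᵥ A *ᵥ (v + A⁻¹ *ᵥ b) - b ⬝ᵥ A⁻¹ *ᵥ b := by
  have mulVec_inv_mulVec : A *ᵥ A⁻¹ *ᵥ b = b := by
    rw [mulVec_mulVec, mul_nonsing_inv A ((isUnit_iff_isUnit_det A).1 hA_unit), one_mulVec]
  have cross_term : (A⁻¹ *ᵥ b) ⬝ᵥ A *ᵥ v = b ⬝ᵥ v := by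
    rw [dotProduct_mulVec, ← mulVec_transpose, hA.eq, mulVec_inv_mulVec]
  rw [mulVec_add, add_dotProduct, dotProduct_add, dotProduct_add, mulVec_inv_mulVec, cross_term,
    dotProduct_comm v b, dotProduct_comm (A⁻¹ *ᵥ b) b]
  ring

theorem isGreatest_range_dotProduct_mulVec_self_add_two_mul_dotProduct {K : Type*} [Field K]
    [PartialOrder K] [IsOrderedAddMonoid K] [StarRing K] [TrivialStar K] [DecidableEq n]
    {A : Matrix n n K} (hA : (-A).PosDef) (b : n → K) :
    IsGreatest (Set.range fun v : n → K => v ⬝ᵥ A *ᵥ v + 2 * (b ⬝ᵥ v))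
      (-(b ⬝ᵥ A⁻¹ *ᵥ b)) := by
  have hA_symm : A.IsSymm := by
    simpa only [IsHermitian, IsSymm, conjTranspose_eq_transpose_of_trivial, transpose_neg, neg_inj]
      using hA.isHermitian
  have hA_unit : IsUnit A := (IsUnit.neg_iff A).1 hA.isUnit
  have form_nonpos (v : n → K) : v ⬝ᵥ A *ᵥ v ≤ 0 := by
    simpa only [star_trivial, neg_mulVec, dotProduct_neg, neg_nonneg]
      using hA.posSemidef.dotProduct_mulVec_nonneg v
  simp only [dotProduct_mulVec_self_add_two_mul_dotProduct hA_symm hA_unit]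
  constructor
  · exact ⟨-(A⁻¹ *ᵥ b), by simp only [neg_add_cancel, zero_dotProduct, zero_sub]⟩
  · rintro _ ⟨v, rfl⟩
    simpa only [sub_eq_add_neg, add_le_iff_nonpos_left] using form_nonpos (v + A⁻¹ *ᵥ b)

end CompletingTheSquare

section BlockMatrices

variable {m n p R : Type*}

/-- The operation `Θ₁ ⊛ Θ₂` on block matrices, under which quadratic kernels compose in max-plus
convolution. The outer and the shared index types may differ. It is meaningful only when
`Θ₁²² + Θ₂¹¹` is invertible, since `⁻¹` is zero on singular matrices. -/
noncomputable def maxPlusProd [CommRing R] [Fintype n] [DecidableEq n]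
    (Θ₁ : Matrix (m ⊕ n) (m ⊕ n) R) (Θ₂ : Matrix (n ⊕ p) (n ⊕ p) R) :
    Matrix (m ⊕ p) (m ⊕ p) R :=
  fromBlocks
    (Θ₁.toBlocks₁₁ - Θ₁.toBlocks₁₂ * (Θ₁.toBlocks₂₂ + Θ₂.toBlocks₁₁)⁻¹ * Θ₁.toBlocks₂₁)
    (-(Θ₁.toBlocks₁₂ * (Θ₁.toBlocks₂₂ + Θ₂.toBlocks₁₁)⁻¹ * Θ₂.toBlocks₁₂))
    (-(Θ₂.toBlocks₂₁ * (Θ₁.toBlocks₂₂ + Θ₂.toBlocks₁₁)⁻¹ * Θ₁.toBlocks₂₁))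
    (Θ₂.toBlocks₂₂ - Θ₂.toBlocks₂₁ * (Θ₁.toBlocks₂₂ + Θ₂.toBlocks₁₁)⁻¹ * Θ₂.toBlocks₁₂)

variable [Fintype m] [Fintype n] [Fintype p]

theorem sumElim_dotProduct_mulVec_sumElim_s12 [NonUnitalNonAssocSemiring R]
    (M : Matrix (m ⊕ n) (m ⊕ n) R) (x : m → R) (y : n → R) :
    Sum.elim x y ⬝ᵥ M *ᵥ Sum.elim x y =
      x ⬝ᵥ M.toBlocks₁₁ *ᵥ x + x ⬝ᵥ M.toBlocks₁₂ *ᵥ y +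
        (y ⬝ᵥ M.toBlocks₂₁ *ᵥ x + y ⬝ᵥ M.toBlocks₂₂ *ᵥ y) := by
  conv_lhs => rw [← fromBlocks_toBlocks M]
  rw [fromBlocks_mulVec, sumElim_dotProduct_sumElim, Sum.elim_comp_inl, Sum.elim_comp_inr,
    dotProduct_add, dotProduct_add]

variable [CommRing R] {Θ₁ : Matrix (m ⊕ n) (m ⊕ n) R} {Θ₂ : Matrix (n ⊕ p) (n ⊕ p) R}

theorem add_sumElim_dotProduct_mulVec_sumElim (hΘ₁ : Θ₁.toBlocks₂₁ = Θ₁.toBlocks₁₂ᵀ)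
    (hΘ₂ : Θ₂.toBlocks₂₁ = Θ₂.toBlocks₁₂ᵀ) (x : m → R) (y : p → R) (ρ : n → R) :
    Sum.elim x ρ ⬝ᵥ Θ₁ *ᵥ Sum.elim x ρ + Sum.elim ρ y ⬝ᵥ Θ₂ *ᵥ Sum.elim ρ y =
      x ⬝ᵥ Θ₁.toBlocks₁₁ *ᵥ x + y ⬝ᵥ Θ₂.toBlocks₂₂ *ᵥ y +
        (ρ ⬝ᵥ (Θ₁.toBlocks₂₂ + Θ₂.toBlocks₁₁) *ᵥ ρ +
          2 * ((Θ₁.toBlocks₂₁ *ᵥ x + Θ₂.toBlocks₁₂ *ᵥ y) ⬝ᵥ ρ)) := by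
  simp only [sumElim_dotProduct_mulVec_sumElim_s12, hΘ₁, hΘ₂, dotProduct_transpose_mulVec,
    dotProduct_comm _ ρ, add_mulVec, dotProduct_add]
  ring

theorem sumElim_dotProduct_maxPlusProd_mulVec_sumElim [DecidableEq n]
    (hΘ₁ : Θ₁.toBlocks₂₁ = Θ₁.toBlocks₁₂ᵀ) (hΘ₂ : Θ₂.toBlocks₂₁ = Θ₂.toBlocks₁₂ᵀ)
    (x : m → R) (y : p → R) :
    Sum.elim x y ⬝ᵥ maxPlusProd Θ₁ Θ₂ *ᵥ Sum.elim x y =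
      x ⬝ᵥ Θ₁.toBlocks₁₁ *ᵥ x + y ⬝ᵥ Θ₂.toBlocks₂₂ *ᵥ y -
        (Θ₁.toBlocks₂₁ *ᵥ x + Θ₂.toBlocks₁₂ *ᵥ y) ⬝ᵥ
          (Θ₁.toBlocks₂₂ + Θ₂.toBlocks₁₁)⁻¹ *ᵥ
            (Θ₁.toBlocks₂₁ *ᵥ x + Θ₂.toBlocks₁₂ *ᵥ y) := by
  have move_left (w : n → R) : x ⬝ᵥ Θ₁.toBlocks₁₂ *ᵥ w = (Θ₁.toBlocks₂₁ *ᵥ x) ⬝ᵥ w := by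
    rw [hΘ₁, mulVec_transpose, dotProduct_mulVec]
  have move_right (w : n → R) : y ⬝ᵥ Θ₂.toBlocks₂₁ *ᵥ w = (Θ₂.toBlocks₁₂ *ᵥ y) ⬝ᵥ w := by
    rw [hΘ₂, dotProduct_transpose_mulVec, dotProduct_comm]
  simp only [sumElim_dotProduct_mulVec_sumElim_s12, maxPlusProd, toBlocks_fromBlocks₁₁,
    toBlocks_fromBlocks₁₂, toBlocks_fromBlocks₂₁, toBlocks_fromBlocks₂₂, sub_mulVec, neg_mulVec,
    ← mulVec_mulVec, dotProduct_sub, dotProduct_neg, move_left, move_right, mulVec_add,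
    dotProduct_add, add_dotProduct]
  ring

end BlockMatrices

theorem maxplus_convolution_quadratic_general {m n p K : Type*} [Fintype m] [Fintype n]
    [Fintype p] [DecidableEq n] [Field K] [LinearOrder K] [IsStrictOrderedRing K] [StarRing K]
    [TrivialStar K] (Θ₁ : Matrix (m ⊕ n) (m ⊕ n) K) (Θ₂ : Matrix (n ⊕ p) (n ⊕ p) K)
    (hΘ₁ : Θ₁.toBlocks₂₁ = Θ₁.toBlocks₁₂ᵀ) (hΘ₂ : Θ₂.toBlocks₂₁ = Θ₂.toBlocks₁₂ᵀ)
    (hPi : (-(Θ₁.toBlocks₂₂ + Θ₂.toBlocks₁₁)).PosDef) (x : m → K) (y : p → K) :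
    IsGreatest
      (Set.range fun ρ : n → K =>
        (1 / 2) * (Sum.elim x ρ ⬝ᵥ Θ₁ *ᵥ Sum.elim x ρ) +
          (1 / 2) * (Sum.elim ρ y ⬝ᵥ Θ₂ *ᵥ Sum.elim ρ y))
      ((1 / 2) * (Sum.elim x y ⬝ᵥ maxPlusProd Θ₁ Θ₂ *ᵥ Sum.elim x y)) := by
  set c := x ⬝ᵥ Θ₁.toBlocks₁₁ *ᵥ x + y ⬝ᵥ Θ₂.toBlocks₂₂ *ᵥ y with hc
  have half_add_mono : Monotone fun t : K => (1 / 2) * (c + t) := fun _ _ hst => by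
    dsimp only
    gcongr
  simp only [← mul_add, add_sumElim_dotProduct_mulVec_sumElim hΘ₁ hΘ₂,
    sumElim_dotProduct_maxPlusProd_mulVec_sumElim hΘ₁ hΘ₂, ← hc, sub_eq_add_neg]
  simpa only [← Set.range_comp, Function.comp_def] using half_add_mono.map_isGreatest
    (isGreatest_range_dotProduct_mulVec_self_add_two_mul_dotProduct hPi
      (Θ₁.toBlocks₂₁ *ᵥ x + Θ₂.toBlocks₁₂ *ᵥ y))

/-- Max-plus convolution of quadratic kernels: for symmetric `2n×2n` matrices `Θ₁, Θ₂`
(with `Θᵢ²¹ = (Θᵢ¹²)ᵀ`) such that `Π = Θ₁²² + Θ₂¹¹` is negative definite, the supremum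
over `ρ` of `½[x;ρ]ᵀΘ₁[x;ρ] + ½[ρ;y]ᵀΘ₂[ρ;y]` is attained and equals
`½[x;y]ᵀ(Θ₁ ⊛ Θ₂)[x;y]`. -/
theorem maxplus_convolution_quadratic {n : ℕ}
    (T₁11 T₁12 T₁22 T₂11 T₂12 T₂22 : Matrix (Fin n) (Fin n) ℝ)
    (hT₁11 : T₁11.IsSymm) (hT₁22 : T₁22.IsSymm)
    (hT₂11 : T₂11.IsSymm) (hT₂22 : T₂22.IsSymm)
    (hPi : (-(T₁22 + T₂11)).PosDef)
    (x y : Fin n → ℝ) :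
    IsGreatest
      (Set.range fun ρ : Fin n → ℝ =>
        (1 / 2) * (Sum.elim x ρ ⬝ᵥ fromBlocks T₁11 T₁12 T₁12ᵀ T₁22 *ᵥ Sum.elim x ρ) +
          (1 / 2) * (Sum.elim ρ y ⬝ᵥ fromBlocks T₂11 T₂12 T₂12ᵀ T₂22 *ᵥ Sum.elim ρ y))
      ((1 / 2) * (Sum.elim x y ⬝ᵥ
        fromBlocks
          (T₁11 - T₁12 * (T₁22 + T₂11)⁻¹ * T₁12ᵀ)
          (-(T₁12 * (T₁22 + T₂11)⁻¹ * T₂12))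
          (-(T₂12ᵀ * (T₁22 + T₂11)⁻¹ * T₁12ᵀ))
          (T₂22 - T₂12ᵀ * (T₁22 + T₂11)⁻¹ * T₂12) *ᵥ Sum.elim x y)) :=
  maxplus_convolution_quadratic_general (fromBlocks T₁11 T₁12 T₁12ᵀ T₁22)
    (fromBlocks T₂11 T₂12 T₂12ᵀ T₂22) rfl rfl hPi x y
end
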